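/- arXiv:1912.02560 — 4 statements merged into one kernel-verified Lean document; each statement's English description precedes it below -/
import Mathlib

section
/- Let $G$ be a connected graph with maximal degree $\Delta \geq 2$ (a natural number) such that $G$ has infinite motion, i.e. every automorphism of $G$ other than the identity moves infinitely many vertices. Then there exists a vertex colouring of $G$ using at most $1 + (\tfrac{5}{2} + \tfrac{3}{2}\log_2 \Delta)\lceil \sqrt{\Delta} \rceil$ colours which is asymmetric, i.e. the only automorphism of $G$ mapping every vertex to a vertex of the same colour is the identity. -/
/-!
Let `m = ⌈√Δ⌉`. Give a root `r` a colour of its own and colour the levels (spheres around `r`) one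
after the other, keeping the following invariant: the group `A` of automorphisms preserving the
colours used up to level `n` fixes all levels below `n` pointwise, and its orbits on level `n` have
at most `m` elements. The step to level `n + 1` has two ingredients.

*Fixing level `n`.* By infinite motion it suffices that colour-preserving automorphisms preserve the
set of parents (neighbours on level `n`) of every vertex on level `n + 1`, since then an
automorphism may be replaced by the identity beyond level `n`. Orbits on level `n + 1` have at most
`m * Δ` elements, each having a parent in an orbit of size at most `m`. If the parent set is not
constant on an orbit `O`, choose an orbit `U` on level `n` such that the trace of the parent set on
`U` varies on `O`. As `|U| ≤ m`, some `m` vertices of `O` separate all points of `U` which are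
separated by the parent sets of vertices in `O`; marking these vertices with `m` distinct colours
forces the traces to be preserved. All traces occur equally often on `O`, so orbits at least halve.
Hence after `log₂ (m * Δ)` such batches of colours all parent sets are preserved.

*Small orbits on level `n + 1`.* Then orbits on level `n + 1` consist of vertices with the same
parents, so they have at most `Δ ≤ m * m` elements. Distributing `m` default colours evenly among
the vertices with the same parents and using them on the unmarked ones leaves orbits of size at most
`m`.

In total `1 + m + m * log₂ (m * Δ)` colours suffice, and `m * Δ ≤ 2 * Δ ^ (3 / 2)`.
-/

namespace AsymmetricColouring

open MulAction
open scoped Pointwise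

/-! ### Rigid labellings -/

section GroupAction

variable {Γ V W α β : Type*} [Group Γ] [MulAction Γ V] [MulAction Γ W]

/-- The group elements preserving the colouring `c`. -/
def colourStabilizer (Γ : Type*) {V α : Type*} [Group Γ] [MulAction Γ V] (c : V → α) :
    Subgroup Γ where
  carrier := {g | ∀ x, c (g • x) = c x}
  one_mem' x := by rw [one_smul]
  mul_mem' {g h} hg hh x := by rw [mul_smul, hg, hh]
  inv_mem' {g} hg x := by rw [← hg, smul_inv_smul]

lemma colourStabilizer_comp_of_injective {f : α → β} (hf : f.Injective) (c : V → α) :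
    colourStabilizer Γ (f ∘ c) = colourStabilizer Γ c :=
  Subgroup.ext fun _ => forall_congr' fun _ => hf.eq_iff

lemma exists_nat_colouring [Finite α] (c : V → α) :
    ∃ c' : V → ℕ, (Set.range c').Finite ∧ (Set.range c').ncard ≤ Nat.card α ∧
      colourStabilizer Γ c' = colourStabilizer Γ c := by
  let f (i : α) : ℕ := Finite.equivFin α i
  have hf : f.Injective := Fin.val_injective.comp (Finite.equivFin α).injective
  refine ⟨f ∘ c, ?_, ?_, colourStabilizer_comp_of_injective hf c⟩ <;> rw [Set.range_comp]
  · exact (Set.toFinite _).image f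
  · exact (Set.ncard_image_le (Set.toFinite _)).trans (Set.ncard_le_card _)

/-- A partial labelling (`none` means unlabelled) is rigid if every group element preserving the
labels fixes all labelled points. -/
def IsRigid (Γ : Type*) {V α : Type*} [Group Γ] [MulAction Γ V] (l : V → Option α) : Prop :=
  colourStabilizer Γ l ≤ fixingSubgroup Γ {x | l x ≠ none}

lemma IsRigid.smul_eq {l : V → Option α} (hl : IsRigid Γ l) {g : Γ}
    (hg : g ∈ colourStabilizer Γ l) {x : V} (hx : l x ≠ none) : g • x = x :=
  (mem_fixingSubgroup_iff Γ).1 (hl hg) x hx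

/-- The union of two partial labellings with distinct sets of labels, where the labels of `l` take
precedence over those of `l'`. -/
def overlay (l : V → Option α) (l' : V → Option β) (x : V) : Option (α ⊕ β) :=
  ((l x).map .inl).or ((l' x).map .inr)

lemma overlay_eq_none_iff {l : V → Option α} {l' : V → Option β} {x : V} :
    overlay l l' x = none ↔ l x = none ∧ l' x = none := by
  simp [overlay]

lemma eq_and_eq_of_overlay_eq {l : V → Option α} {l' : V → Option β} {x y : V}
    (h : overlay l l' x = overlay l l' y) : l x = l y ∧ (l x = none → l' x = l' y) := by
  unfold overlay at h
  cases hx : l x <;> cases hy : l y <;> cases hx' : l' x <;> cases hy' : l' y <;> simp_all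

lemma colourStabilizer_overlay_le_left (l : V → Option α) (l' : V → Option β) :
    colourStabilizer Γ (overlay l l') ≤ colourStabilizer Γ l :=
  fun _ hg x => (eq_and_eq_of_overlay_eq (hg x)).1

lemma IsRigid.colourStabilizer_overlay_le_right {l : V → Option α} (hl : IsRigid Γ l)
    (l' : V → Option β) : colourStabilizer Γ (overlay l l') ≤ colourStabilizer Γ l' := by
  intro g hg x
  by_cases hx : l x = none
  · exact (eq_and_eq_of_overlay_eq (hg x)).2 ((eq_and_eq_of_overlay_eq (hg x)).1.trans hx)
  · rw [hl.smul_eq (colourStabilizer_overlay_le_left l l' hg) hx]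

lemma IsRigid.overlay {l : V → Option α} {l' : V → Option β} (hl : IsRigid Γ l)
    (hl' : IsRigid (colourStabilizer Γ l) l') : IsRigid Γ (overlay l l') := by
  intro g hg
  have hgl : g ∈ colourStabilizer Γ l := colourStabilizer_overlay_le_left l l' hg
  have hgl' : (⟨g, hgl⟩ : colourStabilizer Γ l) ∈ colourStabilizer _ l' :=
    hl.colourStabilizer_overlay_le_right l' hg
  refine (mem_fixingSubgroup_iff Γ).2 fun x hx => ?_
  by_cases hlx : l x = none
  · exact hl'.smul_eq hgl' fun hlx' => hx (overlay_eq_none_iff.2 ⟨hlx, hlx'⟩)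
  · exact hl.smul_eq hgl hlx

lemma IsRigid.map {l : V → Option α} (hl : IsRigid Γ l) {f : α → β} (hf : f.Injective) :
    IsRigid Γ (Option.map f ∘ l) := by
  simpa [IsRigid, colourStabilizer_comp_of_injective (Option.map_injective hf)] using hl

lemma exists_labelling {S : Set V} {m : ℕ} (hS : S.encard ≤ m) :
    ∃ l : V → Option (Fin m), (∀ x, l x ≠ none ↔ x ∈ S) ∧ S.InjOn l := by
  classical
  have hcard : S.encard ≤ (Set.range (some : Fin m → Option (Fin m))).encard := by
    exact hS.trans (by simpa using (Option.some_injective (Fin m)).encard_range)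
  obtain ⟨f, hf, hinj⟩ := (Set.finite_of_encard_le_coe hS).exists_injOn_of_encard_le hcard
  refine ⟨fun x => if x ∈ S then f x else none, fun x => ?_, fun x hx y hy hxy => ?_⟩
  · by_cases hx : x ∈ S
    · obtain ⟨i, hi⟩ := hf hx
      simp [hx, ← hi]
    · simp [hx]
  · exact hinj hx hy (by simpa [hx, hy] using hxy)

lemma exists_isRigid_labelling {S : Set V} {m : ℕ} (hS : ∀ x, (S ∩ orbit Γ x).encard ≤ m) :
    ∃ l : V → Option (Fin m), (∀ x, l x ≠ none ↔ x ∈ S) ∧ IsRigid Γ l := by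
  have horbit (o : orbitRel.Quotient Γ V) : (S ∩ o.orbit).encard ≤ m := by
    rw [o.orbit_eq_orbit_out Quotient.out_eq']
    exact hS _
  choose l hl hinj using fun o => exists_labelling (horbit o)
  let o (x : V) : orbitRel.Quotient Γ V := Quotient.mk'' x
  have ho (g : Γ) (x : V) : o (g • x) = o x := orbitRel.Quotient.quotient_smul_eq
  have hmem (x : V) : x ∈ (o x).orbit := orbitRel.Quotient.mem_orbit.2 rfl
  have hsupp (x : V) : l (o x) x ≠ none ↔ x ∈ S := by simp [hl, hmem]
  refine ⟨fun x => l (o x) x, hsupp, fun g hg => ?_⟩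
  refine (mem_fixingSubgroup_iff Γ).2 fun x hx => ?_
  have hgx : l (o x) (g • x) = l (o x) x := by simpa only [ho] using hg x
  refine hinj (o x) ((hl _ _).1 ?_) ((hl _ _).1 hx) hgx
  rwa [hgx]

/-! ### Labellings stabilizing an equivariant family of sets -/

variable {p : V → Set W}

/-- An element moving `q x` moves the `H`-orbit of `x` off itself, as `q` is constant on it. -/
lemma two_mul_encard_orbit_le [MulAction Γ β] {q : V → β} (hq : ∀ (g : Γ) x, q (g • x) = g • q x)
    {x : V} (hx : q x ∉ fixedPoints Γ β) {H : Subgroup Γ} (hH : H ≤ stabilizer Γ (q x)) :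
    2 * (orbit H x).encard ≤ (orbit Γ x).encard := by
  obtain ⟨g, hg⟩ : ∃ g : Γ, g • q x ≠ q x := by simpa using hx
  have hconst : ∀ y ∈ orbit H x, q y = q x := by
    rintro _ ⟨h, rfl⟩
    exact (hq h x).trans (hH h.2)
  have hdisj : Disjoint (orbit H x) (g • orbit H x) := by
    refine Set.disjoint_left.2 ?_
    rintro _ hy ⟨y, hy', rfl⟩
    exact hg (by rw [← hconst y hy', ← hq, hconst _ hy, hconst y hy'])
  calc 2 * (orbit H x).encard = (orbit H x ∪ g • orbit H x).encard := by
        rw [Set.encard_union_eq hdisj, Set.encard_smul_set, two_mul]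
    _ ≤ (orbit Γ x).encard := by
        refine Set.encard_le_encard (Set.union_subset (orbit_subgroup_subset H x) ?_)
        exact (Set.smul_set_mono (orbit_subgroup_subset H x)).trans (smul_orbit_subset g x)

lemma smul_mem_fixedPoints_iff {g : Γ} {x : V} :
    g • x ∈ fixedPoints Γ V ↔ x ∈ fixedPoints Γ V := by
  constructor <;> intro h
  · rwa [← inv_smul_smul g x, h]
  · rwa [h]

/-- Take sets whose indicator functions form a basis of the span of all indicator functions. -/
lemma exists_separating_subset (p : V → Set W) (O : Set V) {U : Set W} (hU : U.Finite) :
    ∃ T ⊆ O, T.encard ≤ U.encard ∧ ∀ u ∈ U, ∀ v ∈ U,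
      (∀ x ∈ T, (u ∈ p x ↔ v ∈ p x)) → ∀ x ∈ O, (u ∈ p x ↔ v ∈ p x) := by
  classical
  have := hU.fintype
  let indicator (x : V) (u : U) : ℚ := if (u : W) ∈ p x then 1 else 0
  obtain ⟨T, hTO, -, hspan, hindep⟩ :=
    exists_linearIndepOn_extension (linearIndepOn_empty ℚ indicator) (Set.empty_subset O)
  refine ⟨T, hTO, ?_, fun u hu v hv hT x hx => ?_⟩
  · simpa only [rank_fun', Cardinal.toENat_nat, Set.coe_fintypeCard] using
      hindep.encard_le_toENat_rank
  · let φ : (U → ℚ) →ₗ[ℚ] ℚ := LinearMap.proj ⟨u, hu⟩ - LinearMap.proj ⟨v, hv⟩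
    have hker : Submodule.span ℚ (indicator '' T) ≤ LinearMap.ker φ := by
      rw [Submodule.span_le]
      rintro _ ⟨y, hy, rfl⟩
      simp [φ, indicator, hT y hy]
    have hφ : indicator x ⟨u, hu⟩ = indicator x ⟨v, hv⟩ :=
      sub_eq_zero.1 (hker (hspan (Set.mem_image_of_mem _ hx)))
    by_cases hux : u ∈ p x <;> by_cases hvx : v ∈ p x <;> simp_all [indicator]

/-- An element fixing a separating set pointwise moves each `u ∈ U` to a point of `U` which is not
separated from `u`. -/
lemma exists_subset_orbit_stabilizing_traces (hp : ∀ (g : Γ) x, p (g • x) = g • p x) (x : V)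
    (u : W) (hu : (orbit Γ u).Finite) :
    ∃ T ⊆ orbit Γ x, T.encard ≤ (orbit Γ u).encard ∧
      ∀ y ∈ orbit Γ x, fixingSubgroup Γ T ≤ stabilizer Γ (p y ∩ orbit Γ u) := by
  obtain ⟨T, hTx, hTu, hsep⟩ := exists_separating_subset p (orbit Γ x) hu
  refine ⟨T, hTx, hTu, fun y hy g hg => ?_⟩
  have hgp (w : W) (hw : w ∈ orbit Γ u) : g⁻¹ • w ∈ p y ↔ w ∈ p y := by
    refine hsep _ (mem_orbit_of_mem_orbit _ hw) _ hw (fun t ht => ?_) y hy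
    have hgt : g • t = t := (mem_fixingSubgroup_iff Γ).1 hg t ht
    rw [← Set.mem_smul_set_iff_inv_smul_mem, ← hp, hgt]
  rw [mem_stabilizer_iff, Set.smul_set_inter, smul_orbit]
  ext w
  simp only [Set.mem_inter_iff, and_congr_left_iff, Set.mem_smul_set_iff_inv_smul_mem]
  exact hgp w

lemma exists_subset_orbit_halving (hp : ∀ (g : Γ) x, p (g • x) = g • p x) {x : V}
    (hx : p x ∉ fixedPoints Γ (Set W)) {m : ℕ} (hm : ∀ u ∈ p x, (orbit Γ u).encard ≤ m) :
    ∃ T ⊆ orbit Γ x, T.encard ≤ m ∧ ∀ y ∈ orbit Γ x, ∀ H ≤ fixingSubgroup Γ T,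
      2 * (orbit H y).encard ≤ (orbit Γ y).encard := by
  obtain ⟨g, u, hux, hgu⟩ : ∃ g : Γ, ∃ u ∈ p x, g • u ∉ p x := by
    by_contra! h
    exact hx fun g => (Set.smul_set_subset_iff.2 fun u => h g u).antisymm
      (Set.subset_smul_set_iff.2 (Set.smul_set_subset_iff.2 fun u => h g⁻¹ u))
  obtain ⟨T, hTx, hTu, hT⟩ := exists_subset_orbit_stabilizing_traces hp x u
    (Set.finite_of_encard_le_coe (hm u hux))
  let q (y : V) : Set W := p y ∩ orbit Γ u
  have hq (g : Γ) (y : V) : q (g • y) = g • q y := by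
    simp only [q, hp, Set.smul_set_inter, smul_orbit]
  have hqx : q x ∉ fixedPoints Γ (Set W) := fun h => by
    have hgq : g • u ∈ g • q x := Set.smul_mem_smul_set ⟨hux, mem_orbit_self u⟩
    rw [h g] at hgq
    exact hgu hgq.1
  refine ⟨T, hTx, hTu.trans (hm u hux), fun y hy H hH => ?_⟩
  refine two_mul_encard_orbit_le hq ?_ (hH.trans (hT y hy))
  obtain ⟨k, rfl⟩ := hy
  simpa only [hq, smul_mem_fixedPoints_iff] using hqx

lemma exists_halving_set (hp : ∀ (g : Γ) x, p (g • x) = g • p x) {m : ℕ}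
    (hm : ∀ x, ∀ u ∈ p x, (orbit Γ u).encard ≤ m) :
    ∃ S : Set V, (∀ x ∈ S, p x ∉ fixedPoints Γ (Set W)) ∧
      (∀ x, (S ∩ orbit Γ x).encard ≤ m) ∧
      ∀ x, p x ∉ fixedPoints Γ (Set W) → ∀ H ≤ fixingSubgroup Γ S,
        2 * (orbit H x).encard ≤ (orbit Γ x).encard := by
  have hfix {x y : V} (hy : y ∈ orbit Γ x) :
      p y ∈ fixedPoints Γ (Set W) ↔ p x ∈ fixedPoints Γ (Set W) := by
    obtain ⟨g, rfl⟩ := hy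
    simp only [hp, smul_mem_fixedPoints_iff]
  have horbit (o : orbitRel.Quotient Γ V) : ∃ T ⊆ o.orbit, T.encard ≤ m ∧
      (∀ x ∈ T, p x ∉ fixedPoints Γ (Set W)) ∧
      ∀ x ∈ o.orbit, p x ∉ fixedPoints Γ (Set W) → ∀ H ≤ fixingSubgroup Γ T,
        2 * (orbit H x).encard ≤ (orbit Γ x).encard := by
    induction o using Quotient.inductionOn' with | h x
    rw [orbitRel.Quotient.orbit_mk]
    by_cases hx : p x ∈ fixedPoints Γ (Set W)
    · exact ⟨∅, by simp, by simp, by simp, fun y hy hpy => (hpy ((hfix hy).2 hx)).elim⟩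
    · obtain ⟨T, hTx, hTm, hT⟩ := exists_subset_orbit_halving hp hx (hm x)
      exact ⟨T, hTx, hTm, fun y hy => (hfix (hTx hy)).not.2 hx, fun y hy _ => hT y hy⟩
  choose T hTo hTm hTfix hT using horbit
  refine ⟨⋃ o, T o, by simpa using fun x o hx => hTfix o x hx, fun x => ?_, fun x hx H hH => ?_⟩
  · refine (Set.encard_le_encard ?_).trans (hTm (Quotient.mk'' x))
    rintro y ⟨hy, hyx⟩
    obtain ⟨o, hyo⟩ := Set.mem_iUnion.1 hy
    rwa [← Quotient.sound' hyx, orbitRel.Quotient.mem_orbit.1 (hTo o hyo)]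
  · exact hT (Quotient.mk'' x) x (orbitRel.Quotient.mem_orbit.2 rfl) hx H
      (hH.trans (fixingSubgroup_antitone Γ V (Set.subset_iUnion T _)))

/-- Each batch of `m` labels halves the orbits on which `p` still varies. -/
lemma exists_isRigid_stabilizing (hp : ∀ (g : Γ) x, p (g • x) = g • p x) {m k : ℕ}
    (hm : ∀ x, ∀ u ∈ p x, (orbit Γ u).encard ≤ m)
    (hk : ∀ x, p x ∉ fixedPoints Γ (Set W) → (orbit Γ x).encard < 2 ^ (k + 1)) :
    ∃ l : V → Option (Fin (k * m)), IsRigid Γ l ∧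
      (∀ x, l x ≠ none → p x ∉ fixedPoints Γ (Set W)) ∧
      ∀ x, colourStabilizer Γ l ≤ stabilizer Γ (p x) := by
  induction k generalizing Γ with
  | zero =>
    refine ⟨fun _ => none, by simp [IsRigid], by simp, fun x g _ => ?_⟩
    by_contra hg
    have hlt : (orbit Γ x).encard < 2 := by simpa using hk x fun h => hg (h g)
    have hgx : g • x = x := Set.encard_le_one_iff.1 (Order.le_of_lt_succ hlt) _ _
      (mem_orbit x g) (mem_orbit_self x)
    exact hg (by rw [mem_stabilizer_iff, ← hp, hgx])
  | succ k ih =>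
    obtain ⟨S, hSfix, hSm, hS⟩ := exists_halving_set hp hm
    obtain ⟨l, hlS, hl⟩ := exists_isRigid_labelling hSm
    set H := colourStabilizer Γ l
    have hHS : H ≤ fixingSubgroup Γ S := by simpa only [IsRigid, hlS, Set.ofPred_mem_eq] using hl
    have hfix {x : V} (hx : p x ∉ fixedPoints H (Set W)) : p x ∉ fixedPoints Γ (Set W) :=
      fun h => hx fun g => h g
    obtain ⟨l', hl', hlfix', hstab⟩ := ih (Γ := H) (fun g => hp g)
      (fun x u hu => (Set.encard_le_encard (orbit_subgroup_subset H u)).trans (hm x u hu))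
      (fun x hx => by
        have h2 := (hS x (hfix hx) H hHS).trans_lt (hk x (hfix hx))
        rw [pow_succ' 2 (k + 1)] at h2
        exact lt_of_mul_lt_mul_left' h2)
    let e : Fin m ⊕ Fin (k * m) ≃ Fin ((k + 1) * m) := finSumFinEquiv.trans (finCongr (by ring))
    refine ⟨Option.map e ∘ overlay l l', (hl.overlay hl').map e.injective, fun x hx => ?_,
      fun x g hg => ?_⟩
    · by_cases hlx : l x = none
      · refine hfix (hlfix' x fun hlx' => hx ?_)
        simp [overlay_eq_none_iff.2 ⟨hlx, hlx'⟩]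
      · exact hSfix x ((hlS x).1 hlx)
    · rw [colourStabilizer_comp_of_injective (Option.map_injective e.injective)] at hg
      have hgH : (⟨g, colourStabilizer_overlay_le_left l l' hg⟩ : H) ∈ colourStabilizer H l' :=
        hl.colourStabilizer_overlay_le_right l' hg
      exact hstab x hgH

end GroupAction

/-! ### Colourings of graphs level by level -/

/-- Inject each fibre of `q` with at most `a * b` elements into a grid of `a` columns and `b` rows,
and colour its elements by their columns. -/
lemma exists_encard_le_of_encard_le_mul {V β : Type*} (q : V → β) (a b : ℕ) [NeZero a] :
    ∃ f : V → Fin a, ∀ x, {y | q y = q x}.encard ≤ (a * b : ℕ) →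
      {y | q y = q x ∧ f y = f x}.encard ≤ b := by
  have hIio (N : ℕ) : (Set.Iio N).encard = N := by
    rw [← Finset.coe_Iio, Set.encard_coe_eq_coe_finsetCard, Nat.card_Iio]
  have hfibre (t : β) : ∃ f : V → Fin a, {y | q y = t}.encard ≤ (a * b : ℕ) →
      ∀ i, {y | q y = t ∧ f y = i}.encard ≤ b := by
    by_cases ht : {y | q y = t}.encard ≤ (a * b : ℕ)
    swap
    · exact ⟨0, fun h => (ht h).elim⟩
    obtain ⟨e, he, hinj⟩ := (Set.finite_of_encard_le_coe ht).exists_injOn_of_encard_le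
      (t := Set.Iio (a * b)) (ht.trans_eq (hIio _).symm)
    refine ⟨fun y => Fin.ofNat a (e y), fun _ i => ?_⟩
    have hmaps : Set.MapsTo (e · / a) {y | q y = t ∧ Fin.ofNat a (e y) = i} (Set.Iio b) :=
      fun y hy => Nat.div_lt_of_lt_mul (he hy.1)
    refine (Set.encard_le_encard_of_injOn hmaps ?_).trans_eq (hIio b)
    rintro y ⟨hy, hyi⟩ z ⟨hz, hzi⟩ hdiv
    have hmod : e y % a = e z % a := congrArg Fin.val (hyi.trans hzi.symm)
    exact hinj hy hz (Nat.ext_div_mod hdiv hmod)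
  choose f hf using hfibre
  refine ⟨fun y => f (q y) y, fun x hx => (Set.encard_le_encard ?_).trans (hf (q x) hx (f (q x) x))⟩
  rintro y ⟨hy, hyx⟩
  exact ⟨hy, by simpa only [hy] using hyx⟩

section Graph

variable {V : Type*} {G : SimpleGraph V} {r u v x : V} {m n k Δ : ℕ}

lemma edist_smul_le (φ : G ≃g G) (u v : V) : G.edist (φ • u) (φ • v) ≤ G.edist u v :=
  le_iInf fun w =>
    (SimpleGraph.edist_le (w.map φ.toHom)).trans (by rw [SimpleGraph.Walk.length_map])

lemma dist_smul_smul (φ : G ≃g G) (u v : V) : G.dist (φ • u) (φ • v) = G.dist u v := by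
  have hle := edist_smul_le φ⁻¹ (φ • u) (φ • v)
  rw [inv_smul_smul, inv_smul_smul] at hle
  exact congrArg ENat.toNat ((edist_smul_le φ u v).antisymm hle)

lemma dist_smul_of_mem_stabilizer {φ : G ≃g G} (hφ : φ ∈ stabilizer (G ≃g G) r) (x : V) :
    G.dist r (φ • x) = G.dist r x := by
  simpa only [mem_stabilizer_iff.1 hφ] using dist_smul_smul φ r x

/-- The neighbours of `x` on level `n` if `x` lies on level `n + 1`, and `∅` otherwise. Levels are
distances from the root `r`. -/
def parents (G : SimpleGraph V) (r : V) (n : ℕ) (x : V) : Set V :=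
  {u | G.Adj u x ∧ G.dist r u = n ∧ G.dist r x = n + 1}

lemma parents_smul {φ : G ≃g G} (hφ : φ ∈ stabilizer (G ≃g G) r) (n : ℕ) (x : V) :
    parents G r n (φ • x) = φ • parents G r n x := by
  ext u
  obtain ⟨u, rfl⟩ := MulAction.surjective φ u
  have hadj : G.Adj (φ • u) (φ • x) ↔ G.Adj u x := φ.map_adj_iff
  simp only [Set.smul_mem_smul_set_iff, parents, Set.mem_ofPred_eq, hadj,
    dist_smul_of_mem_stabilizer hφ]

lemma parents_nonempty (hx : G.dist r x = n + 1) : (parents G r n x).Nonempty := by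
  obtain ⟨w, hw⟩ := SimpleGraph.exists_walk_of_dist_ne_zero (G := G) (u := x) (v := r)
    (by rw [SimpleGraph.dist_comm]; omega)
  rw [SimpleGraph.dist_comm, hx] at hw
  cases w with
  | nil => simp at hw
  | @cons _ u _ hadj w =>
    have hle : G.dist r u ≤ w.length := SimpleGraph.dist_comm.trans_le (SimpleGraph.dist_le w)
    have hdiff := hadj.diff_dist_adj (u := r)
    rw [SimpleGraph.Walk.length_cons] at hw
    exact ⟨u, hadj.symm, by omega, hx⟩

lemma finite_ball (hG : G.Connected) (hfin : ∀ v, (G.neighborSet v).Finite) (r : V) (n : ℕ) :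
    {x | G.dist r x ≤ n}.Finite := by
  induction n with
  | zero =>
    refine (Set.finite_singleton r).subset fun x hx => ?_
    exact (hG.dist_eq_zero_iff.1 (Nat.le_zero.1 hx)).symm
  | succ n ih =>
    refine (ih.union (ih.biUnion fun u _ => hfin u)).subset fun x hx => ?_
    rcases Nat.le_succ_iff.1 hx with hx | hx
    · exact Or.inl hx
    · obtain ⟨u, hux, hu, -⟩ := parents_nonempty hx
      exact Or.inr (Set.mem_biUnion (x := u) hu.le hux)

/-- Every automorphism other than the identity moves infinitely many vertices. -/
def InfiniteMotion (G : SimpleGraph V) : Prop :=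
  ∀ φ : G ≃g G, (∀ v, φ v = v) ∨ {v | φ v ≠ v}.Infinite

lemma exists_iso_eqOn_of_adj_iff {φ : G ≃g G} {S : Set V} (hS : ∀ v, φ v ∈ S ↔ v ∈ S)
    (hadj : ∀ u ∈ S, ∀ v ∉ S, G.Adj (φ u) v ↔ G.Adj u v) :
    ∃ ψ : G ≃g G, Set.EqOn ψ φ S ∧ Set.EqOn ψ id Sᶜ := by
  classical
  let e : Equiv.Perm V := (Equiv.Perm.subtypePerm φ.toEquiv (p := (· ∈ S)) hS).ofSubtype
  have he : ∀ v ∈ S, e v = φ v := fun v hv => Equiv.Perm.ofSubtype_apply_of_mem _ hv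
  have he' : ∀ v ∉ S, e v = v := fun v hv => Equiv.Perm.ofSubtype_apply_of_not_mem _ hv
  refine ⟨⟨e, fun {u v} => ?_⟩, he, he'⟩
  by_cases hu : u ∈ S <;> by_cases hv : v ∈ S
  · rw [he u hu, he v hv, φ.map_adj_iff]
  · rw [he u hu, he' v hv, hadj u hu v hv]
  · rw [he' u hu, he v hv, G.adj_comm, hadj v hv u hu, G.adj_comm]
  · rw [he' u hu, he' v hv]

lemma InfiniteMotion.apply_eq_of_finite (hG : InfiniteMotion G) {φ : G ≃g G} {S : Set V}
    (hfin : S.Finite) (hS : ∀ v, φ v ∈ S ↔ v ∈ S)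
    (hadj : ∀ u ∈ S, ∀ v ∉ S, G.Adj (φ u) v ↔ G.Adj u v) : ∀ v ∈ S, φ v = v := by
  obtain ⟨ψ, hψ, hψ'⟩ := exists_iso_eqOn_of_adj_iff hS hadj
  have hid : ∀ v, ψ v = v := (hG ψ).resolve_right fun hinf =>
    hinf (hfin.subset fun v hv => by_contra fun hvS => hv (hψ' hvS))
  exact fun v hv => (hψ hv).symm.trans (hid v)

lemma InfiniteMotion.smul_eq_of_smul_parents_eq (hG : InfiniteMotion G) (hconn : G.Connected)
    (hfin : ∀ v, (G.neighborSet v).Finite) {φ : G ≃g G} (hφ : φ ∈ stabilizer (G ≃g G) r)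
    (hpar : ∀ x, φ • parents G r n x = parents G r n x) (hx : G.dist r x ≤ n) : φ • x = x := by
  have hdist := dist_smul_of_mem_stabilizer hφ
  refine hG.apply_eq_of_finite (finite_ball hconn hfin r n) (fun v => ?_) (fun u hu v hv => ?_) x hx
  · exact iff_of_eq (congrArg (· ≤ n) (hdist v))
  · have hparents {w : V} (hw : G.dist r w ≤ n) : G.Adj w v ↔ w ∈ parents G r n v := by
      refine ⟨fun h => ?_, And.left⟩
      have hdiff := h.diff_dist_adj (u := r)
      have hv : n < G.dist r v := not_le.1 hv
      exact ⟨h, by omega, by omega⟩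
    change G.Adj (φ • u) v ↔ G.Adj u v
    rw [hparents ((hdist u).trans_le hu), hparents hu, ← hpar v, Set.smul_mem_smul_set_iff, hpar]

lemma encard_orbit_le_mul (hdeg : ∀ v, (G.neighborSet v).encard ≤ Δ) {A : Subgroup (G ≃g G)}
    (hadj : G.Adj u v) (hu : (orbit A u).encard ≤ m) : (orbit A v).encard ≤ (m * Δ : ℕ) := by
  have hfin : (orbit A u).Finite := Set.finite_of_encard_le_coe hu
  have hsub : orbit A v ⊆ ⋃ w ∈ orbit A u, G.neighborSet w := by
    rintro _ ⟨a, rfl⟩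
    exact Set.mem_biUnion (mem_orbit u a) ((a : G ≃g G).map_adj_iff.2 hadj)
  calc (orbit A v).encard ≤ ∑ w ∈ hfin.toFinset, (G.neighborSet w).encard := by
        rw [← finsum_mem_eq_finite_toFinset_sum _ hfin]
        exact (Set.encard_le_encard hsub).trans (hfin.encard_biUnion_le _)
    _ ≤ hfin.toFinset.card • (Δ : ℕ∞) := Finset.sum_le_card_nsmul _ _ _ fun w _ => hdeg w
    _ = (orbit A u).encard * Δ := by rw [nsmul_eq_mul, ← hfin.encard_eq_coe_toFinset_card]
    _ ≤ (m * Δ : ℕ) := by rw [Nat.cast_mul]; gcongr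

/-- The invariant of the recursion over levels: `A` fixes the root `r` and all vertices on levels
below `n`, and its orbits on level `n` have at most `m` elements. -/
structure LevelInvariant (G : SimpleGraph V) (r : V) (m n : ℕ) (A : Subgroup (G ≃g G)) : Prop where
  le_stabilizer : A ≤ stabilizer (G ≃g G) r
  smul_eq : ∀ φ ∈ A, ∀ x, G.dist r x < n → φ • x = x
  encard_orbit_le : ∀ x, G.dist r x = n → (orbit A x).encard ≤ m

lemma levelInvariant_stabilizer (hconn : G.Connected) (r : V) (hm : 0 < m) :
    LevelInvariant G r m 0 (stabilizer (G ≃g G) r) where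
  le_stabilizer := le_rfl
  smul_eq _ _ _ h := (Nat.not_lt_zero _ h).elim
  encard_orbit_le x hx := by
    obtain rfl := hconn.dist_eq_zero_iff.1 hx
    have horbit : orbit (stabilizer (G ≃g G) r) r ⊆ {r} := by
      rintro _ ⟨φ, rfl⟩
      exact φ.2
    exact (Set.encard_le_encard horbit).trans (by simpa using Nat.succ_le_of_lt hm)

lemma LevelInvariant.exists_marks {A : Subgroup (G ≃g G)} (hA : LevelInvariant G r m n A)
    (hdeg : ∀ v, (G.neighborSet v).encard ≤ Δ) (hk : m * Δ < 2 ^ (k + 1)) :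
    ∃ l : V → Option (Fin (k * m)), IsRigid A l ∧ (∀ x, l x ≠ none → G.dist r x = n + 1) ∧
      ∀ x, colourStabilizer A l ≤ stabilizer A (parents G r n x) := by
  have hlevel {x : V} (hx : parents G r n x ∉ fixedPoints A (Set V)) : G.dist r x = n + 1 := by
    by_contra h
    have hempty : parents G r n x = ∅ := Set.eq_empty_of_forall_notMem fun u hu => h hu.2.2
    exact hx fun φ => by rw [hempty, Set.smul_set_empty]
  obtain ⟨l, hl, hlfix, hstab⟩ := exists_isRigid_stabilizing (Γ := A) (p := parents G r n) (k := k)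
    (fun φ => parents_smul (hA.le_stabilizer φ.2) n) (fun x u hu => hA.encard_orbit_le u hu.2.1)
    fun x hx => by
      obtain ⟨u, hux, hu, -⟩ := parents_nonempty (hlevel hx)
      exact (encard_orbit_le_mul hdeg hux (hA.encard_orbit_le u hu)).trans_lt (mod_cast hk)
  exact ⟨l, hl, fun x hx => hlevel (hlfix x hx), hstab⟩

lemma exists_default_colouring (hdeg : ∀ v, (G.neighborSet v).encard ≤ Δ) (hm : 0 < m)
    (hmΔ : Δ ≤ m * m) (r : V) (n : ℕ) :
    ∃ d : V → Fin m, ∀ x, G.dist r x = n + 1 →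
      {y | parents G r n y = parents G r n x ∧ d y = d x}.encard ≤ m := by
  have : NeZero m := ⟨hm.ne'⟩
  obtain ⟨d, hd⟩ := exists_encard_le_of_encard_le_mul (parents G r n) m m
  refine ⟨d, fun x hx => hd x ?_⟩
  obtain ⟨u, hu⟩ := parents_nonempty hx
  calc {y | parents G r n y = parents G r n x}.encard
    _ ≤ (G.neighborSet u).encard := Set.encard_le_encard fun y hy => (hy.symm ▸ hu).1
    _ ≤ (m * m : ℕ) := (hdeg u).trans (mod_cast hmΔ)

lemma LevelInvariant.exists_succ (hG : InfiniteMotion G) (hconn : G.Connected)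
    (hdeg : ∀ v, (G.neighborSet v).encard ≤ Δ) (hm : 0 < m) (hmΔ : Δ ≤ m * m)
    (hk : m * Δ < 2 ^ (k + 1)) {A : Subgroup (G ≃g G)} (hA : LevelInvariant G r m n A) :
    ∃ c : V → Option (Fin (k * m) ⊕ Fin m), (∀ x, c x ≠ none ↔ G.dist r x = n + 1) ∧
      LevelInvariant G r m (n + 1) (A ⊓ colourStabilizer (G ≃g G) c) := by
  obtain ⟨l, hl, hlevel, hstab⟩ := hA.exists_marks hdeg hk
  obtain ⟨d, hd⟩ := exists_default_colouring hdeg hm hmΔ r n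
  let d' (x : V) : Option (Fin m) := if G.dist r x = n + 1 then some (d x) else none
  have hpreserved (φ : G ≃g G) (hφ : φ ∈ A ⊓ colourStabilizer (G ≃g G) (overlay l d')) (x : V) :
      φ • parents G r n x = parents G r n x ∧ d' (φ • x) = d' x := by
    have hφ' : (⟨φ, hφ.1⟩ : A) ∈ colourStabilizer A (overlay l d') := hφ.2
    exact ⟨hstab x (colourStabilizer_overlay_le_left l d' hφ'),
      hl.colourStabilizer_overlay_le_right d' hφ' x⟩
  refine ⟨overlay l d', fun x => ?_, inf_le_left.trans hA.le_stabilizer, fun φ hφ x hx => ?_,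
    fun x hx => (Set.encard_le_encard ?_).trans (hd x hx)⟩
  · have hd' : d' x = none ↔ G.dist r x ≠ n + 1 := by simp [d']
    rw [Ne, overlay_eq_none_iff, hd']
    have hlx := hlevel x
    tauto
  · exact hG.smul_eq_of_smul_parents_eq hconn (fun v => Set.finite_of_encard_le_coe (hdeg v))
      (hA.le_stabilizer hφ.1) (fun x => (hpreserved φ hφ x).1) (Nat.le_of_lt_succ hx)
  · rintro _ ⟨⟨φ, hφ⟩, rfl⟩
    have hφr : φ ∈ stabilizer (G ≃g G) r := hA.le_stabilizer hφ.1
    obtain ⟨hpar, hdx⟩ := hpreserved φ hφ x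
    have hdφ : d (φ • x) = d x := by
      simpa only [d', dist_smul_of_mem_stabilizer hφr, hx, if_true, Option.some_inj] using hdx
    exact ⟨(parents_smul hφr n x).trans hpar, hdφ⟩

/-- The root has colour `c 0 r = none`, as `0 - 1 = 0`; all other colours differ from `none`. -/
lemma colourStabilizer_levels_le {α : Type*} (hconn : G.Connected) (r : V)
    {c : ℕ → V → Option α} (hc : ∀ n x, c n x ≠ none ↔ G.dist r x = n + 1) :
    colourStabilizer (G ≃g G) (fun x => c (G.dist r x - 1) x) ≤
      stabilizer (G ≃g G) r ⊓ ⨅ n, colourStabilizer (G ≃g G) (c n) := by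
  intro φ hφ
  have hroot : φ ∈ stabilizer (G ≃g G) r := by
    have hr : c (G.dist r (φ • r) - 1) (φ • r) = none :=
      (hφ r).trans (not_not.1 ((hc _ r).not.2 (by simp)))
    have hdist : G.dist r (φ • r) = 0 := by
      have hlevel := (hc _ _).not.1 (not_not.2 hr)
      omega
    exact (hconn.dist_eq_zero_iff.1 hdist).symm
  refine ⟨hroot, Subgroup.mem_iInf.2 fun n x => ?_⟩
  have hdist := dist_smul_of_mem_stabilizer hroot x
  by_cases hx : G.dist r x = n + 1
  · simpa only [hdist, hx, Nat.add_sub_cancel] using hφ x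
  · rw [not_not.1 ((hc n x).not.2 hx), not_not.1 ((hc n _).not.2 (hdist ▸ hx))]

lemma exists_colourStabilizer_eq_bot (hG : InfiniteMotion G) (hconn : G.Connected)
    (hdeg : ∀ v, (G.neighborSet v).encard ≤ Δ) (hm : 0 < m) (hmΔ : Δ ≤ m * m)
    (hk : m * Δ < 2 ^ (k + 1)) :
    ∃ c : V → Option (Fin (k * m) ⊕ Fin m), colourStabilizer (G ≃g G) c = ⊥ := by
  obtain ⟨r⟩ := hconn.nonempty
  choose col hcol hsucc using fun n (A : {A // LevelInvariant G r m n A}) =>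
    A.2.exists_succ hG hconn hdeg hm hmΔ hk
  let A (n : ℕ) : {A // LevelInvariant G r m n A} :=
    n.rec ⟨_, levelInvariant_stabilizer hconn r hm⟩ fun n A => ⟨_, hsucc n A⟩
  refine ⟨fun x => col _ (A (G.dist r x - 1)) x, (Subgroup.eq_bot_iff_forall _).2 fun φ hφ => ?_⟩
  obtain ⟨hφr, hφc⟩ := colourStabilizer_levels_le hconn r (fun n => hcol n (A n)) hφ
  have hA (n : ℕ) : φ ∈ (A n).1 := by
    induction n with
    | zero => exact hφr
    | succ n ih => exact ⟨ih, Subgroup.mem_iInf.1 hφc n⟩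
  exact RelIso.ext fun x => (A (G.dist r x + 1)).2.smul_eq φ (hA _) x (Nat.lt_succ_self _)

end Graph

/-! ### The number of colours -/

lemma le_ceil_sqrt_mul_self (Δ : ℕ) : Δ ≤ ⌈√(Δ : ℝ)⌉₊ * ⌈√(Δ : ℝ)⌉₊ := by
  have h : (Δ : ℝ) ≤ ⌈√(Δ : ℝ)⌉₊ * ⌈√(Δ : ℝ)⌉₊ := calc
    (Δ : ℝ) = √Δ * √Δ := (Real.mul_self_sqrt Δ.cast_nonneg).symm
    _ ≤ ⌈√(Δ : ℝ)⌉₊ * ⌈√(Δ : ℝ)⌉₊ := by gcongr <;> exact Nat.le_ceil _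
  exact_mod_cast h

lemma natLog_ceil_sqrt_mul_self_le {Δ : ℕ} (hΔ : 0 < Δ) :
    (Nat.log 2 (⌈√(Δ : ℝ)⌉₊ * Δ) : ℝ) ≤ 1 + 3 / 2 * Real.logb 2 Δ := by
  have hΔ' : (1 : ℝ) ≤ Δ := by exact_mod_cast hΔ
  have hsqrt : 1 ≤ √(Δ : ℝ) := Real.one_le_sqrt.2 hΔ'
  have hceil : (⌈√(Δ : ℝ)⌉₊ : ℝ) ≤ 2 * √Δ := by
    linarith [Nat.ceil_lt_add_one (Real.sqrt_nonneg Δ)]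
  calc (Nat.log 2 (⌈√(Δ : ℝ)⌉₊ * Δ) : ℝ)
    _ ≤ Real.logb 2 (⌈√(Δ : ℝ)⌉₊ * Δ : ℕ) := Real.natLog_le_logb _ _
    _ ≤ Real.logb 2 (2 * √Δ * Δ) := by
      rw [Nat.cast_mul]
      exact Real.logb_le_logb_of_le one_lt_two (by positivity) (by gcongr)
    _ = 1 + 3 / 2 * Real.logb 2 Δ := by
      rw [Real.logb_mul (by positivity) (by positivity), Real.logb_mul two_ne_zero (by positivity),
        Real.logb_self_eq_one one_lt_two, Real.sqrt_eq_rpow,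
        Real.logb_rpow_eq_mul_logb_of_pos (by positivity)]
      ring

end AsymmetricColouring

/-- A connected graph with infinite motion and maximal degree `Δ ≥ 2` has an
asymmetric colouring with at most `1 + (5/2 + 3/2 * log₂ Δ) * ⌈√Δ⌉` colours. -/
theorem stmt_0 {V : Type*} (G : SimpleGraph V) [∀ v : V, Fintype (G.neighborSet v)]
    (Δ : ℕ) (hΔ : 2 ≤ Δ) (hdeg : ∀ v : V, G.degree v ≤ Δ) (hconn : G.Connected)
    (hmotion : ∀ φ : G ≃g G, (∀ v, φ v = v) ∨ {v : V | φ v ≠ v}.Infinite) :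
    ∃ c : V → ℕ, (Set.range c).Finite ∧
      ((Set.range c).ncard : ℝ) ≤
        1 + (5 / 2 + 3 / 2 * Real.logb 2 Δ) * (⌈Real.sqrt Δ⌉₊ : ℝ) ∧
      ∀ φ : G ≃g G, (∀ v, c (φ v) = c v) → ∀ v, φ v = v := by
  have hΔ0 : 0 < Δ := by omega
  set m := ⌈√(Δ : ℝ)⌉₊
  have hm : 0 < m := Nat.ceil_pos.2 (Real.sqrt_pos.2 (Nat.cast_pos.2 hΔ0))
  have hdeg' (v : V) : (G.neighborSet v).encard ≤ Δ := by
    rw [← Set.coe_fintypeCard, G.card_neighborSet_eq_degree]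
    exact_mod_cast hdeg v
  obtain ⟨c, hc⟩ := AsymmetricColouring.exists_colourStabilizer_eq_bot hmotion hconn hdeg' hm
    (AsymmetricColouring.le_ceil_sqrt_mul_self Δ) (Nat.lt_pow_succ_log_self one_lt_two _)
  obtain ⟨c', hfin, hcard, hc'⟩ := AsymmetricColouring.exists_nat_colouring (Γ := G ≃g G) c
  refine ⟨c', hfin, ?_, fun φ hφ v => ?_⟩
  · rw [Finite.card_option, Nat.card_sum, Nat.card_fin, Nat.card_fin] at hcard
    have hlog := AsymmetricColouring.natLog_ceil_sqrt_mul_self_le hΔ0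
    calc ((Set.range c').ncard : ℝ)
      _ ≤ Nat.log 2 (m * Δ) * m + m + 1 := by exact_mod_cast hcard
      _ = 1 + (Nat.log 2 (m * Δ) + 1) * m := by ring
      _ ≤ 1 + (5 / 2 + 3 / 2 * Real.logb 2 Δ) * m :=
        add_le_add_right (mul_le_mul_of_nonneg_right (by linarith) m.cast_nonneg) 1
  · have hφ' : φ ∈ AsymmetricColouring.colourStabilizer (G ≃g G) c' := hφ
    rw [hc', hc, Subgroup.mem_bot] at hφ'
    rw [hφ', RelIso.coe_one, id]
end

section
/- Let $\Gamma$ be a group acting on two finite sets $\Omega$ and $\Omega'$. Suppose that the pointwise stabiliser of $\Omega'$ in $\Gamma$ is contained in the pointwise stabiliser of $\Omega$ in $\Gamma$. Then there exists a subset $S \subseteq \Omega$ such that $|S| \leq \tfrac{3|\Omega'|}{2}$ and the pointwise stabiliser of $S$ in $\Gamma$ equals the pointwise stabiliser of $\Omega$ in $\Gamma$. -/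
/-!
By induction on `n = |Ω'|`, the action of `Γ` on `Ω` has a base of size at most `(3 * n - 4) / 2`
(`n ≥ 2`). Bases coming from an orbit and its complement, or from the blocks of a block system and
the set of blocks, combine to one that is smaller than this bound by at least one point.

So is the base obtained for a primitive group that does not contain the alternating group. By
Bochert's argument it has a base `Δ` of size `k ≤ n / 2` on `Ω'`, and the induction hypothesis
applies to the action of the setwise stabiliser of `Δ` on `Δ`. A subgroup `X` meeting this
stabiliser trivially has order at most `n.choose k`, and `log₁₆ (|X| ^ 2 * 2 ^ n)` points of `Ω`
are a base for it. Indeed a point in an orbit of size at least `4` divides `|X|` by at least `4`.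
When all orbits have size at most `3`, the group has order `2 ^ r * 3 ^ s`, and the bound
`2 * r + s ≤ n` comes from the estimate `2 * a + 3 * b ≤ n` for an abelian quotient of order
`2 ^ a * 3 ^ b` of a permutation group of degree `n`.

If the alternating group is induced on `Ω'` by the stabiliser of every point of `Ω`, one point is
enough. If it is induced by `Γ` but not by some point stabiliser, then passing to that stabiliser
uses up the point saved in the other cases.
-/

open scoped commutatorElement Nat Pointwise

/-! ### Kernels and bases of group actions -/

/-- The kernel of the action of `G` on `Ω`, i.e. the pointwise stabiliser of all of `Ω`. -/
def actionKernel (G Ω : Type*) [Group G] [MulAction G Ω] : Subgroup G :=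
  (MulAction.toPermHom G Ω).ker

/-- `G` has a base of size at most `c` on `Ω`, where a base is a set of points whose pointwise
stabiliser is the kernel of the action. -/
def HasBase (G Ω : Type*) [Group G] [MulAction G Ω] (c : ℕ) : Prop :=
  ∃ S : Finset Ω, S.card ≤ c ∧ fixingSubgroup G (S : Set Ω) ≤ actionKernel G Ω

section ActionKernel

variable {G Ω : Type*} [Group G] [MulAction G Ω]

theorem mem_actionKernel {g : G} : g ∈ actionKernel G Ω ↔ ∀ x : Ω, g • x = x := by
  simp only [actionKernel, MonoidHom.mem_ker, Equiv.Perm.ext_iff, MulAction.toPermHom_apply,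
    MulAction.toPerm_apply, Equiv.Perm.one_apply]

instance actionKernel_normal : (actionKernel G Ω).Normal :=
  MonoidHom.normal_ker _

theorem actionKernel_subgroup (H : Subgroup G) :
    actionKernel H Ω = (actionKernel G Ω).subgroupOf H := by
  ext g
  simp only [mem_actionKernel, Subgroup.mem_subgroupOf, Subgroup.smul_def]

theorem fixingSubgroup_subgroup (H : Subgroup G) (A : Set Ω) :
    fixingSubgroup H A = (fixingSubgroup G A).subgroupOf H := by
  ext g
  simp only [mem_fixingSubgroup_iff, Subgroup.mem_subgroupOf, Subgroup.smul_def]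

theorem actionKernel_subgroup_mono {α : Type*} [MulAction G α]
    (h : actionKernel G α ≤ actionKernel G Ω) (H : Subgroup G) :
    actionKernel H α ≤ actionKernel H Ω := by
  rw [actionKernel_subgroup, actionKernel_subgroup]
  exact Subgroup.comap_mono h

theorem actionKernel_subMulAction (A : SubMulAction G Ω) :
    actionKernel G A = fixingSubgroup G (A : Set Ω) := by
  ext g
  simp only [mem_actionKernel, mem_fixingSubgroup_iff, Subtype.forall, Subtype.ext_iff,
    SubMulAction.val_smul, SetLike.mem_coe]

theorem index_actionKernel_dvd_factorial [Finite Ω] :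
    (actionKernel G Ω).index ∣ (Nat.card Ω)! := by
  rw [actionKernel, Subgroup.index_ker, ← Nat.card_perm]
  exact Subgroup.card_subgroup_dvd_card _

theorem index_fixingSubgroup_dvd_factorial {A : Set Ω} (hfin : A.Finite)
    (hA : ∀ g : G, ∀ a ∈ A, g • a ∈ A) : (fixingSubgroup G A).index ∣ A.ncard ! := by
  let B : SubMulAction G Ω := ⟨A, fun g _ ha => hA g _ ha⟩
  have : Finite B := hfin
  rw [← show _ = fixingSubgroup G A from actionKernel_subMulAction B]
  exact index_actionKernel_dvd_factorial

theorem index_actionKernel_stabilizer_mul (ω : Ω) :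
    (actionKernel (MulAction.stabilizer G ω) Ω).index * (MulAction.orbit G ω).ncard
      = (actionKernel G Ω).index := by
  rw [actionKernel_subgroup, ← MulAction.index_stabilizer]
  exact Subgroup.relIndex_mul_index fun _ hg => mem_actionKernel.1 hg ω

theorem index_actionKernel_stabilizer_lt [Finite G] {ω : Ω}
    (hω : 1 < (MulAction.orbit G ω).ncard) :
    (actionKernel (MulAction.stabilizer G ω) Ω).index < (actionKernel G Ω).index := by
  refine (lt_mul_of_one_lt_right (Nat.pos_of_ne_zero ?_) hω).trans_eq
    (index_actionKernel_stabilizer_mul ω)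
  exact Subgroup.index_ne_zero_of_finite

theorem index_actionKernel_le_of_inf_le {H X : Subgroup G} [H.FiniteIndex]
    (hX : X ⊓ H ≤ actionKernel G Ω) : (actionKernel X Ω).index ≤ H.index := by
  have (K : Subgroup G) : H.IsFiniteRelIndex K := Subgroup.isFiniteRelIndex_of_finiteIndex
  rw [actionKernel_subgroup]
  calc (actionKernel G Ω).relIndex X ≤ (X ⊓ H).relIndex X := by
        refine Subgroup.relIndex_le_of_le_left hX ?_
        rw [Subgroup.inf_relIndex_left]
        exact Subgroup.relIndex_ne_zero
    _ = H.relIndex X := Subgroup.inf_relIndex_left _ _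
    _ ≤ H.relIndex ⊤ := Subgroup.relIndex_le_of_le_right le_top Subgroup.relIndex_ne_zero
    _ = H.index := Subgroup.relIndex_top_right _

theorem smul_mem_orbit_iff (g : G) {a b : Ω} :
    g • a ∈ MulAction.orbit G b ↔ a ∈ MulAction.orbit G b :=
  ⟨fun h => by simpa using MulAction.mem_orbit_of_mem_orbit g⁻¹ h,
    MulAction.mem_orbit_of_mem_orbit g⟩

end ActionKernel

section HasBase

variable {G Ω : Type*} [Group G] [MulAction G Ω] {c c₁ c₂ : ℕ}

theorem HasBase.mono (h : HasBase G Ω c₁) (hc : c₁ ≤ c₂) : HasBase G Ω c₂ :=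
  let ⟨S, hS, hfix⟩ := h
  ⟨S, hS.trans hc, hfix⟩

theorem hasBase_zero_of_actionKernel_eq_top (h : actionKernel G Ω = ⊤) : HasBase G Ω 0 :=
  ⟨∅, le_rfl, by rw [h]; exact le_top⟩

theorem HasBase.of_fixingSubgroup_le (H : Subgroup G) (S : Finset Ω)
    (hS : fixingSubgroup G (S : Set Ω) ≤ H) (h : HasBase H Ω c) : HasBase G Ω (S.card + c) := by
  classical
  obtain ⟨T, hT, hfix⟩ := h
  refine ⟨S ∪ T, (Finset.card_union_le _ _).trans (by omega), fun g hg => ?_⟩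
  rw [Finset.coe_union, fixingSubgroup_union] at hg
  rw [fixingSubgroup_subgroup, actionKernel_subgroup] at hfix
  exact hfix (x := ⟨g, hS hg.1⟩) hg.2

theorem HasBase.of_stabilizer (ω : Ω) (h : HasBase (MulAction.stabilizer G ω) Ω c) :
    HasBase G Ω (c + 1) := by
  rw [add_comm]
  exact h.of_fixingSubgroup_le _ {ω} fun g hg => (mem_fixingSubgroup_iff G).1 hg ω (by simp)

/-- The pointwise stabiliser `X` of a base for `H` meets `H` in the kernel only. -/
theorem HasBase.add_of_inf_le (H : Subgroup G) (h₁ : HasBase H Ω c₁)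
    (h₂ : ∀ X : Subgroup G, X ⊓ H ≤ actionKernel G Ω → HasBase X Ω c₂) :
    HasBase G Ω (c₁ + c₂) := by
  obtain ⟨S, hS, hfix⟩ := h₁
  rw [fixingSubgroup_subgroup, actionKernel_subgroup] at hfix
  refine ((h₂ _ fun g hg => ?_).of_fixingSubgroup_le _ S le_rfl).mono (by omega)
  exact hfix (x := ⟨g, hg.2⟩) hg.1

/-- Each base point can be chosen to cut the group down properly, and so uses up at least one prime
factor of its order. -/
theorem hasBase_cardFactors [Finite G] :
    HasBase G Ω (ArithmeticFunction.cardFactors (actionKernel G Ω).index) := by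
  induction hq : (actionKernel G Ω).index using Nat.strong_induction_on generalizing G with
  | _ q ih =>
  by_cases htriv : actionKernel G Ω = ⊤
  · exact (hasBase_zero_of_actionKernel_eq_top htriv).mono (Nat.zero_le _)
  obtain ⟨g, hg⟩ : ∃ g : G, g ∉ actionKernel G Ω := by
    simpa [Subgroup.eq_top_iff'] using htriv
  obtain ⟨ω, hω⟩ : ∃ ω : Ω, g • ω ≠ ω := by simpa [mem_actionKernel] using hg
  have horb : 1 < (MulAction.orbit G ω).ncard :=
    (Set.one_lt_ncard (Set.finite_range _)).2
      ⟨_, MulAction.mem_orbit ω g, _, MulAction.mem_orbit_self ω, hω⟩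
  refine ((ih _ (hq ▸ index_actionKernel_stabilizer_lt horb) rfl).of_stabilizer ω).mono ?_
  have hsplit := congrArg ArithmeticFunction.cardFactors
    (index_actionKernel_stabilizer_mul (G := G) ω)
  rw [ArithmeticFunction.cardFactors_mul Subgroup.index_ne_zero_of_finite (by omega), hq] at hsplit
  have hpos : ArithmeticFunction.cardFactors (MulAction.orbit G ω).ncard ≠ 0 := by
    rw [Ne, ArithmeticFunction.cardFactors_eq_zero_iff_eq_zero_or_one]
    omega
  omega

theorem two_pow_cardFactors_le {q : ℕ} (hq : q ≠ 0) :
    2 ^ ArithmeticFunction.cardFactors q ≤ q := by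
  rw [ArithmeticFunction.cardFactors_apply]
  conv_rhs => rw [← Nat.prod_primeFactorsList hq]
  exact List.pow_card_le_prod _ _ fun p hp => (Nat.prime_of_mem_primeFactorsList hp).two_le

theorem hasBase_log_two [Finite G] : HasBase G Ω (Nat.log 2 (actionKernel G Ω).index) :=
  hasBase_cardFactors.mono
    (Nat.le_log_of_pow_le one_lt_two (two_pow_cardFactors_le Subgroup.index_ne_zero_of_finite))

end HasBase

/-! ### Abelian quotients of `p`-groups -/

section RelIndex

variable {G : Type*} [Group G]

theorem relIndex_mul_relIndex_of_inf_le {H M K : Subgroup G} (hMK : M ≤ K) (h : K ⊓ H ≤ M) :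
    H.relIndex M * M.relIndex K = H.relIndex K := by
  have hinf : M ⊓ H = K ⊓ H := le_antisymm (inf_le_inf_right H hMK) (le_inf h inf_le_right)
  rw [← Subgroup.inf_relIndex_left M, hinf, Subgroup.relIndex_mul_relIndex _ _ _ h hMK,
    Subgroup.inf_relIndex_left]

variable [Finite G]

theorem relIndex_le_relIndex_mul_relIndex (N : Subgroup G) {H K : Subgroup G} (hHK : H ≤ K) :
    N.relIndex K ≤ N.relIndex H * H.relIndex K := by
  rw [← Subgroup.inf_relIndex_right N H, Subgroup.relIndex_mul_relIndex _ _ _ inf_le_right hHK]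
  exact Subgroup.relIndex_le_of_le_left inf_le_left Subgroup.index_ne_zero_of_finite

theorem relIndex_le_relIndex_mul_relIndex_sup (N : Subgroup G) [N.Normal] {H K : Subgroup G}
    (hHK : H ≤ K) : N.relIndex K ≤ N.relIndex H * (H ⊔ N).relIndex K := by
  have hsup : (H ⊔ N) ⊓ K ⊔ N = H ⊔ N :=
    le_antisymm (sup_le inf_le_left le_sup_right)
      (sup_le_sup_right (le_inf le_sup_left hHK) N)
  calc N.relIndex K
      ≤ N.relIndex ((H ⊔ N) ⊓ K) * ((H ⊔ N) ⊓ K).relIndex K :=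
        relIndex_le_relIndex_mul_relIndex N inf_le_right
    _ = N.relIndex H * (H ⊔ N).relIndex K := by
        rw [← Subgroup.relIndex_sup_right ((H ⊔ N) ⊓ K) N, hsup, Subgroup.relIndex_sup_right,
          Subgroup.inf_relIndex_right]

theorem relIndex_le_relIndex_inf_mul_relIndex {N M M₁ M₂ : Subgroup G} [N.Normal] (h₁ : M₁ ≤ M)
    (h₂ : M₂ ≤ M) (h : M₁ ≤ M₂ ⊔ N) :
    N.relIndex M ≤ N.relIndex (M₁ ⊓ M₂) * M₁.relIndex M := by
  have hsplit : M₁.relIndex M₂ * (M₂ ⊔ N).relIndex M ≤ M₁.relIndex M := by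
    rw [← Subgroup.relIndex_mul_relIndex _ _ _ (le_inf h h₁) inf_le_right,
      Subgroup.inf_relIndex_right]
    exact Nat.mul_le_mul_right _ (Subgroup.relIndex_le_of_le_right (le_inf le_sup_left h₂)
      Subgroup.index_ne_zero_of_finite)
  calc N.relIndex M
      ≤ N.relIndex M₂ * (M₂ ⊔ N).relIndex M := relIndex_le_relIndex_mul_relIndex_sup N h₂
    _ ≤ N.relIndex (M₁ ⊓ M₂) * M₁.relIndex M₂ * (M₂ ⊔ N).relIndex M := by
        gcongr
        rw [← Subgroup.inf_relIndex_right M₁ M₂]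
        exact relIndex_le_relIndex_mul_relIndex N inf_le_right
    _ ≤ N.relIndex (M₁ ⊓ M₂) * M₁.relIndex M := by
        rw [mul_assoc]
        gcongr

theorem exists_normal_index_eq_prime {p : ℕ} [Fact p.Prime] (hG : IsPGroup p G) {H : Subgroup G}
    (hH : H ≠ ⊤) : ∃ M : Subgroup G, H ≤ M ∧ M.Normal ∧ M.index = p := by
  have hp : p.Prime := Fact.out
  obtain ⟨a, ha⟩ := IsPGroup.iff_card.1 hG
  obtain ⟨c, hc⟩ := IsPGroup.iff_card.1 (hG.to_subgroup H)
  have hca : c < a := by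
    rw [← Nat.pow_lt_pow_iff_right hp.one_lt, ← ha, ← hc]
    exact lt_of_le_of_ne H.card_le_card_group (mt H.eq_top_of_card_eq hH)
  obtain ⟨M, hM, hHM⟩ := Sylow.exists_subgroup_card_pow_prime_le p (m := a - 1)
    (ha ▸ pow_dvd_pow _ (Nat.sub_le _ _)) H hc (by omega)
  have hindex : M.index = p := by
    have hcard := M.card_mul_index
    rw [hM, ha, ← pow_sub_one_mul (by omega : a ≠ 0) p] at hcard
    exact Nat.eq_of_mul_eq_mul_left (pow_pos hp.pos _) hcard
  refine ⟨M, hHM, Subgroup.normal_of_index_eq_minFac_card ?_, hindex⟩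
  rw [hindex, ha, Nat.pow_minFac (by omega), hp.minFac_eq]

theorem exists_relIndex_eq_prime {p : ℕ} [Fact p.Prime] (hG : IsPGroup p G) {H K : Subgroup G}
    (hHK : H < K) :
    ∃ M ≤ K, H ≤ M ∧ M.relIndex K = p ∧ K ≤ Subgroup.normalizer M := by
  obtain ⟨M, hHM, hnormal, hindex⟩ := exists_normal_index_eq_prime (hG.to_subgroup K)
    (mt Subgroup.subgroupOf_eq_top.1 hHK.not_ge)
  have hsubgroupOf : (M.map K.subtype).subgroupOf K = M :=
    Subgroup.comap_map_eq_self_of_injective K.subtype_injective M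
  have hle := Subgroup.map_subtype_le M
  refine ⟨M.map K.subtype, hle, ?_, by rwa [Subgroup.relIndex, hsubgroupOf], ?_⟩
  · rw [← Subgroup.map_subgroupOf_eq_of_le hHK.le]
    exact Subgroup.map_mono hHM
  · rwa [← Subgroup.normal_subgroupOf_iff_le_normalizer hle, hsubgroupOf]

end RelIndex

theorem smul_mem_diff {G α : Type*} [Group G] [MulAction G α] {X : Subgroup G} {A B : Set α}
    (hA : ∀ g ∈ X, ∀ a ∈ A, g • a ∈ A) (hB : ∀ g ∈ X, ∀ b ∈ B, g • b ∈ B) :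
    ∀ g ∈ X, ∀ a ∈ A \ B, g • a ∈ A \ B :=
  fun g hg a ha => ⟨hA g hg a ha.1, fun h => ha.2 (by simpa using hB g⁻¹ (inv_mem hg) _ h)⟩

theorem relIndex_stabilizer {G α : Type*} [Group G] [MulAction G α] (X : Subgroup G) (a : α) :
    (MulAction.stabilizer G a).relIndex X = (MulAction.orbit X a).ncard :=
  MulAction.index_stabilizer X a

theorem relIndex_fixingSubgroup_dvd_factorial {G α : Type*} [Group G] [MulAction G α]
    {X : Subgroup G} {A : Set α} (hfin : A.Finite) (hA : ∀ g ∈ X, ∀ a ∈ A, g • a ∈ A) :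
    (fixingSubgroup G A).relIndex X ∣ A.ncard ! := by
  rw [Subgroup.relIndex, ← fixingSubgroup_subgroup]
  exact index_fixingSubgroup_dvd_factorial hfin fun g => hA g g.2

theorem smul_mem_orbit_subgroup {G α : Type*} [Group G] [MulAction G α] {X : Subgroup G} {a : α} :
    ∀ g ∈ X, ∀ b ∈ MulAction.orbit X a, g • b ∈ MulAction.orbit X a :=
  fun g hg _ => MulAction.mem_orbit_of_mem_orbit (⟨g, hg⟩ : X)

theorem pow_mul_prime_pow_le_of_dvd_factorial {p m e : ℕ} (hp : p.Prime) (hm : m ≠ 0)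
    (hpm : p ∣ m) (he : p ^ e ∣ m !) : (p ^ e * p) ^ p ≤ p ^ (2 * m) := by
  have : Fact p.Prime := ⟨hp⟩
  have hlt : (p - 1) * e < m :=
    (Nat.mul_le_mul_left _ ((padicValNat_dvd_iff_le (Nat.factorial_ne_zero m)).1 he)).trans_lt
      (sub_one_mul_padicValNat_factorial_lt_of_ne_zero p hm)
  obtain ⟨q, rfl⟩ := hpm
  obtain ⟨r, rfl⟩ : ∃ r, p = r + 2 := ⟨p - 2, by have := hp.two_le; omega⟩
  have heq : e + 1 ≤ 2 * q := by
    by_contra! h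
    have : (r + 1) * (2 * q) ≤ (r + 1) * e := Nat.mul_le_mul_left _ (by omega)
    rw [show r + 2 - 1 = r + 1 from rfl] at hlt
    nlinarith [Nat.zero_le (r * q)]
  rw [← pow_succ, ← pow_mul]
  exact Nat.pow_le_pow_right (by omega) (by nlinarith)

section PGroup

variable {p : ℕ} {P β : Type*} [Group P] [MulAction P β]

/-- The bound `N.relIndex X ^ p ≤ p ^ |A|` for all subgroups `X` acting on a set `A` of fewer than
`n` points and all `N ≥ [P, P]` such that `X / (X ∩ N)` is a quotient of the group induced by `X` on
`A`. This is the induction hypothesis in the proof of `relIndexBoundBelow`. -/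
def RelIndexBoundBelow (p : ℕ) (P β : Type*) [Group P] [MulAction P β] (n : ℕ) : Prop :=
  ∀ (N X : Subgroup P) (A : Set β), commutator P ≤ N → A.Finite →
    (∀ g ∈ X, ∀ a ∈ A, g • a ∈ A) → X ⊓ fixingSubgroup P A ≤ N → A.ncard < n →
    N.relIndex X ^ p ≤ p ^ A.ncard

variable {N X : Subgroup P} {A : Set β} {b : β}

theorem relIndex_pow_le_of_orbit_ne [Finite P] (ih : RelIndexBoundBelow p P β A.ncard)
    (hN : commutator P ≤ N) (hfin : A.Finite) (hA : ∀ g ∈ X, ∀ a ∈ A, g • a ∈ A)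
    (hfix : X ⊓ fixingSubgroup P A ≤ N) (hb : b ∈ A) (hne : MulAction.orbit X b ≠ A) :
    N.relIndex X ^ p ≤ p ^ A.ncard := by
  have : N.Normal := Subgroup.Normal.of_commutator_le P hN
  have hsub : MulAction.orbit X b ⊆ A := Set.range_subset_iff.2 fun g => hA g g.2 b hb
  set Δ := MulAction.orbit X b
  have hcard : (A \ Δ).ncard + Δ.ncard = A.ncard :=
    Set.ncard_sdiff_add_ncard_of_subset hsub hfin
  have hΔ : Δ.ncard < A.ncard := Set.ncard_lt_ncard (hsub.lt_of_ne hne) hfin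
  have hΔ₀ : 0 < Δ.ncard :=
    (Set.ncard_pos (hfin.subset hsub)).2 ⟨b, MulAction.mem_orbit_self b⟩
  set H := X ⊓ fixingSubgroup P Δ
  have hrest : N.relIndex H ^ p ≤ p ^ (A \ Δ).ncard := by
    refine ih N H (A \ Δ) hN hfin.sdiff
      (fun g hg => smul_mem_diff hA smul_mem_orbit_subgroup g hg.1) (le_trans ?_ hfix) (by omega)
    rw [inf_assoc, ← fixingSubgroup_union, Set.union_sdiff_cancel hsub]
  have horbit : (H ⊔ N).relIndex X ^ p ≤ p ^ Δ.ncard :=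
    ih (H ⊔ N) X Δ (hN.trans le_sup_right) (hfin.subset hsub) smul_mem_orbit_subgroup
      le_sup_left hΔ
  calc N.relIndex X ^ p ≤ (N.relIndex H * (H ⊔ N).relIndex X) ^ p := by
        gcongr
        exact relIndex_le_relIndex_mul_relIndex_sup N inf_le_left
    _ ≤ p ^ A.ncard := by
        rw [mul_pow, ← hcard, pow_add]
        gcongr

/-- Modulo commutators, fixing a set pointwise and fixing a translate of it pointwise impose the
same condition. -/
theorem inf_fixingSubgroup_le_smul_sup {M : Subgroup P} {x : P} (hN : commutator P ≤ N)
    (hx : x ∈ Subgroup.normalizer M) (B : Set β) :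
    M ⊓ fixingSubgroup P B ≤ M ⊓ fixingSubgroup P (x • B) ⊔ N := by
  rintro g ⟨hgM, hgB⟩
  have hconj : x * g * x⁻¹ ∈ M ⊓ fixingSubgroup P (x • B) := by
    refine ⟨(Subgroup.mem_normalizer_iff.1 hx g).1 hgM, (mem_fixingSubgroup_iff P).2 ?_⟩
    rintro _ ⟨z, hz, rfl⟩
    simp only [mul_smul, inv_smul_smul, (mem_fixingSubgroup_iff P).1 hgB z hz]
  rw [show g = ⁅g, x⁆ * (x * g * x⁻¹) by rw [commutatorElement_def]; group]
  exact mul_mem (Subgroup.mem_sup_right (hN (Subgroup.commutator_mem_commutator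
    (Subgroup.mem_top g) (Subgroup.mem_top x)))) (Subgroup.mem_sup_left hconj)

theorem disjoint_orbit_smul_orbit {M : Subgroup P} {x : P} (hx : x ∉ M) (hxX : x ∈ X)
    (hMX : M ≤ X) (hstab : X ⊓ MulAction.stabilizer P b ≤ M) :
    Disjoint (MulAction.orbit M b) (x • MulAction.orbit M b) := by
  rw [Set.disjoint_left]
  rintro _ ⟨⟨g, hg⟩, rfl⟩ ⟨_, ⟨⟨h, hh⟩, rfl⟩, heq⟩
  have heq : x • h • b = g • b := heq
  have hmem : g⁻¹ * x * h ∈ M := by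
    refine hstab (Subgroup.mem_inf.2 ⟨mul_mem (mul_mem (inv_mem (hMX hg)) hxX) (hMX hh), ?_⟩)
    rw [MulAction.mem_stabilizer_iff, mul_smul, mul_smul, heq, inv_smul_smul]
  exact hx ((M.mul_mem_cancel_left (inv_mem hg)).1 ((M.mul_mem_cancel_right hh).1 hmem))

/-- Modulo `N`, fixing `B` and fixing its translate are the same condition, so that fixing these
`2 * |B|` points costs only one factor, a power of `p` dividing `|B|!`. -/
theorem relIndex_pow_le_of_translate [Finite P] [Fact p.Prime] {M : Subgroup P} {B : Set β} {x : P}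
    (ih : RelIndexBoundBelow p P β A.ncard) (hP : IsPGroup p P)
    (hN : commutator P ≤ N) (hfin : A.Finite) (hA : ∀ g ∈ M, ∀ a ∈ A, g • a ∈ A)
    (hfix : M ⊓ fixingSubgroup P A ≤ N) (hB : ∀ g ∈ M, ∀ b ∈ B, g • b ∈ B)
    (hx : x ∈ Subgroup.normalizer M) (hBA : B ∪ x • B ⊆ A) (hdisj : Disjoint B (x • B))
    (hpB : p ∣ B.ncard) (hB₀ : B.Nonempty) :
    (N.relIndex M * p) ^ p ≤ p ^ A.ncard := by
  have : N.Normal := Subgroup.Normal.of_commutator_le P hN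
  have hp : p.Prime := Fact.out
  have hBfin : B.Finite := hfin.subset (Set.subset_union_left.trans hBA)
  have hB₀ : B.ncard ≠ 0 := (Set.ncard_pos hBfin).2 hB₀ |>.ne'
  have hcard : (A \ (B ∪ x • B)).ncard + 2 * B.ncard = A.ncard := by
    rw [← Set.ncard_sdiff_add_ncard_of_subset hBA hfin,
      Set.ncard_union_eq hdisj hBfin hBfin.smul_set, Set.ncard_smul_set, two_mul]
  have hxB : ∀ g ∈ M, ∀ b ∈ x • B, g • b ∈ x • B := by
    rintro g hg _ ⟨z, hz, rfl⟩
    refine ⟨_, hB _ ((Subgroup.mem_normalizer_iff''.1 hx g).1 hg) z hz, ?_⟩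
    simp only [mul_smul, smul_inv_smul]
  set M₁ := M ⊓ fixingSubgroup P B
  set M₂ := M ⊓ fixingSubgroup P (x • B)
  have hrest : N.relIndex (M₁ ⊓ M₂) ^ p ≤ p ^ (A \ (B ∪ x • B)).ncard := by
    refine ih N _ _ hN hfin.sdiff (fun g hg => ?_) (le_trans ?_ hfix) (by omega)
    · exact smul_mem_diff hA (fun g hg a ha => ha.imp (hB g hg a) (hxB g hg a)) g hg.1.1
    · rw [← inf_inf_distrib_left, inf_assoc, ← fixingSubgroup_union, ← fixingSubgroup_union,
        Set.union_sdiff_cancel hBA]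
  obtain ⟨e, he⟩ : ∃ e, M₁.relIndex M = p ^ e := (hP.to_subgroup M).index _
  have hdvd : p ^ e ∣ B.ncard ! := by
    rw [← he, Subgroup.inf_relIndex_left]
    exact relIndex_fixingSubgroup_dvd_factorial hBfin hB
  calc (N.relIndex M * p) ^ p ≤ (N.relIndex (M₁ ⊓ M₂) * M₁.relIndex M * p) ^ p := by
        gcongr
        exact relIndex_le_relIndex_inf_mul_relIndex inf_le_left inf_le_left
          (inf_fixingSubgroup_le_smul_sup hN hx B)
    _ = N.relIndex (M₁ ⊓ M₂) ^ p * (p ^ e * p) ^ p := by rw [he, mul_assoc, mul_pow]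
    _ ≤ p ^ (A \ (B ∪ x • B)).ncard * p ^ (2 * B.ncard) := by
        exact Nat.mul_le_mul hrest (pow_mul_prime_pow_le_of_dvd_factorial hp hB₀ hpB hdvd)
    _ = p ^ A.ncard := by rw [← pow_add, hcard]

theorem le_fixingSubgroup_orbit {M : Subgroup P} (hM : M ≤ MulAction.stabilizer P b)
    (hX : X ≤ Subgroup.normalizer M) : M ≤ fixingSubgroup P (MulAction.orbit X b) := by
  intro g hg
  rw [mem_fixingSubgroup_iff]
  rintro _ ⟨⟨x, hx⟩, rfl⟩
  change g • x • b = x • b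
  have hconj : (x⁻¹ * g * x) • b = b := hM ((Subgroup.mem_normalizer_iff''.1 (hX hx) g).1 hg)
  rwa [mul_smul, mul_smul, inv_smul_eq_iff] at hconj

theorem exists_relIndex_eq_prime_ncard_orbit [Finite P] [Fact p.Prime] (hP : IsPGroup p P)
    (hXb : ¬ X ≤ MulAction.stabilizer P b) :
    ∃ M ≤ X, X ⊓ MulAction.stabilizer P b ≤ M ∧ M.relIndex X = p ∧ X ≤ Subgroup.normalizer M ∧
      (MulAction.orbit M b).ncard * p = (MulAction.orbit X b).ncard := by
  obtain ⟨M, hMX, hstab, hindex, hnorm⟩ := exists_relIndex_eq_prime hP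
    (inf_le_left.lt_of_not_ge fun h => hXb (h.trans inf_le_right) :
      X ⊓ MulAction.stabilizer P b < X)
  refine ⟨M, hMX, hstab, hindex, hnorm, ?_⟩
  rw [← relIndex_stabilizer, ← relIndex_stabilizer, ← hindex,
    relIndex_mul_relIndex_of_inf_le hMX hstab]

/-- The orbit of `b` under a subgroup `M` of index `p` containing its stabiliser has a disjoint
translate. This serves if `M` moves `b`. Otherwise `M`, being normal in `X`, fixes all of `A`. -/
theorem relIndex_pow_le_of_orbit_eq [Finite P] [Fact p.Prime]
    (ih : RelIndexBoundBelow p P β A.ncard) (hP : IsPGroup p P)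
    (hN : commutator P ≤ N) (hfin : A.Finite) (hA : ∀ g ∈ X, ∀ a ∈ A, g • a ∈ A)
    (hfix : X ⊓ fixingSubgroup P A ≤ N) (horb : MulAction.orbit X b = A) :
    N.relIndex X ^ p ≤ p ^ A.ncard := by
  have hp : p.Prime := Fact.out
  by_cases hXb : X ≤ MulAction.stabilizer P b
  · have hXA := le_fixingSubgroup_orbit hXb Subgroup.le_normalizer
    rw [Subgroup.relIndex_eq_one.2 ((le_inf le_rfl (horb ▸ hXA)).trans hfix), one_pow]
    exact Nat.one_le_pow _ _ hp.pos
  obtain ⟨M, hMX, hstab, hindex, hnorm, hcard⟩ := exists_relIndex_eq_prime_ncard_orbit hP hXb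
  rw [horb] at hcard
  have hmul : N.relIndex X ≤ N.relIndex M * p :=
    hindex ▸ relIndex_le_relIndex_mul_relIndex N hMX
  obtain ⟨j, hj⟩ : ∃ j, (MulAction.orbit M b).ncard = p ^ j := by
    rw [← relIndex_stabilizer]
    exact (hP.to_subgroup M).index _
  have hfixM : M ⊓ fixingSubgroup P A ≤ N := (inf_le_inf_right _ hMX).trans hfix
  rcases Nat.eq_zero_or_pos j with rfl | hj₀
  · have hMb : M ≤ MulAction.stabilizer P b := by
      rw [← Subgroup.relIndex_eq_one, relIndex_stabilizer, hj, pow_zero]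
    have hMN : M ≤ N := (le_inf le_rfl (horb ▸ le_fixingSubgroup_orbit hMb hnorm)).trans hfixM
    rw [← hcard, hj, pow_zero, one_mul]
    rw [Subgroup.relIndex_eq_one.2 hMN, one_mul] at hmul
    gcongr
  obtain ⟨x, hxX, hxM⟩ : ∃ x ∈ X, x ∉ M := by
    refine SetLike.not_le_iff_exists.1 fun h => hp.ne_one ?_
    rw [← hindex, Subgroup.relIndex_eq_one.2 h]
  have hBA : MulAction.orbit M b ⊆ A :=
    horb ▸ Set.range_subset_iff.2 fun g => MulAction.mem_orbit b (⟨g, hMX g.2⟩ : X)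
  refine (Nat.pow_le_pow_left hmul p).trans <|
    relIndex_pow_le_of_translate ih hP hN hfin (fun g hg => hA g (hMX hg)) hfixM
      smul_mem_orbit_subgroup (hnorm hxX) (Set.union_subset hBA ?_)
      (disjoint_orbit_smul_orbit hxM hxX hMX hstab) (hj ▸ dvd_pow_self p hj₀.ne')
      ⟨b, MulAction.mem_orbit_self b⟩
  rintro _ ⟨a, ha, rfl⟩
  exact hA x hxX a (hBA ha)

theorem relIndexBoundBelow [Finite P] [Fact p.Prime] (hP : IsPGroup p P) (n : ℕ) :
    RelIndexBoundBelow p P β n := by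
  induction n with
  | zero => exact fun _ _ _ _ _ _ _ h => absurd h (Nat.not_lt_zero _)
  | succ n ih =>
    intro N X A hN hfin hA hfix hn
    have ih : RelIndexBoundBelow p P β A.ncard :=
      fun N X B hN hfin hB hfix h => ih N X B hN hfin hB hfix (by omega)
    rcases A.eq_empty_or_nonempty with rfl | ⟨b, hb⟩
    · rw [fixingSubgroup_empty, inf_top_eq] at hfix
      simp [Subgroup.relIndex_eq_one.2 hfix]
    by_cases horb : MulAction.orbit X b = A
    · exact relIndex_pow_le_of_orbit_eq ih hP hN hfin hA hfix horb
    · exact relIndex_pow_le_of_orbit_ne ih hN hfin hA hfix hb horb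

theorem index_pow_le_of_isPGroup [Finite P] [Fact p.Prime] (hP : IsPGroup p P)
    (hN : commutator P ≤ N) (hfin : A.Finite) (hA : ∀ g : P, ∀ a ∈ A, g • a ∈ A)
    (hfix : fixingSubgroup P A ≤ N) : N.index ^ p ≤ p ^ A.ncard := by
  rw [← Subgroup.relIndex_top_right]
  exact relIndexBoundBelow hP (A.ncard + 1) N ⊤ A hN hfin (fun g _ => hA g)
    (inf_le_right.trans hfix) (Nat.lt_succ_self _)

end PGroup

/-! ### Abelian quotients of permutation groups -/

section AbelianQuotient

variable {D α : Type*} [Group D] [MulAction D α]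

theorem commutator_le_subgroupOf {N : Subgroup D} (hN : commutator D ≤ N) (Y : Subgroup D) :
    commutator Y ≤ N.subgroupOf Y := by
  rw [Subgroup.subgroupOf, ← Subgroup.map_le_iff_le_comap, Subgroup.map_subtype_commutator]
  exact (Subgroup.commutator_mono le_top le_top).trans hN

theorem smul_eq_of_coprime_orderOf {x t : D} {a : α} (hxt : Commute x t)
    (hcop : (orderOf x).Coprime (orderOf t)) (h : x • a = t • a) : x • a = a := by
  have hpow (n : ℕ) : x ^ n • a = t ^ n • a := by
    induction n with
    | zero => rw [pow_zero, pow_zero]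
    | succ n ih =>
      rw [pow_succ, mul_smul, h, ← mul_smul, (hxt.pow_left n).eq, mul_smul, ih, ← mul_smul,
        ← pow_succ']
  have hdvd : MulAction.period x a ∣ orderOf t := by
    rw [← MulAction.pow_smul_eq_iff_period_dvd, hpow, pow_orderOf_eq_one, one_smul]
  rw [← MulAction.period_eq_one_iff]
  exact Nat.eq_one_of_dvd_coprimes hcop (MulAction.period_dvd_orderOf x a) hdvd

theorem smul_orbit_of_commute {T : Subgroup D} {g : D} (hg : ∀ t ∈ T, Commute g t) (a : α) :
    g • MulAction.orbit T a = MulAction.orbit T (g • a) := by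
  have hcomm (t : T) : g • t • a = t • g • a := by
    rw [Subgroup.smul_def, Subgroup.smul_def, smul_smul, (hg t t.2).eq, mul_smul]
  ext y
  simp only [Set.mem_smul_set, MulAction.mem_orbit_iff, exists_exists_eq_and, hcomm]

theorem smul_mem_compl_fixedPoints {P : Subgroup D} {g : D} (hg : g ∈ Subgroup.normalizer P) {a : α}
    (ha : a ∈ (MulAction.fixedPoints P α)ᶜ) : g • a ∈ (MulAction.fixedPoints P α)ᶜ := by
  refine fun h => ha fun ⟨x, hx⟩ => ?_
  have hconj : (g * x * g⁻¹) • g • a = g • a :=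
    h ⟨_, (Subgroup.mem_normalizer_iff.1 hg x).1 hx⟩
  rwa [mul_smul, mul_smul, inv_smul_smul, smul_left_cancel_iff] at hconj

theorem two_mul_ncard_image_orbit_le {T : Subgroup D} {A : Set α} (hfin : A.Finite)
    (hA : ∀ t ∈ T, ∀ a ∈ A, t • a ∈ A) :
    2 * (MulAction.orbit T '' A).ncard ≤ A.ncard + (A ∩ MulAction.fixedPoints T α).ncard := by
  classical
  set F := MulAction.fixedPoints T α
  have hmoved : 2 * (MulAction.orbit T '' (A \ F)).ncard ≤ (A \ F).ncard := by
    obtain ⟨B, hB⟩ := (hfin.sdiff (t := F)).exists_finset_coe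
    have hmem {a : α} : a ∈ B ↔ a ∈ A \ F := by rw [← hB, Finset.mem_coe]
    rw [← hB, ← Finset.coe_image, Set.ncard_coe_finset, Set.ncard_coe_finset]
    refine Finset.mul_card_image_le_card _ _ fun O hO => ?_
    obtain ⟨a, ha, rfl⟩ := Finset.mem_image.1 hO
    obtain ⟨haA, haF⟩ := hmem.1 ha
    obtain ⟨t, ht⟩ : ∃ t : T, t • a ≠ a := by simpa [F] using haF
    refine Finset.one_lt_card.2 ⟨a, by simpa using ha, t • a, ?_, ht.symm⟩
    simpa [hmem] using
      ⟨hA t t.2 a haA, smul_mem_compl_fixedPoints (Subgroup.le_normalizer t.2) haF⟩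
  have himage : (MulAction.orbit T '' A).ncard
      ≤ (A ∩ F).ncard + (MulAction.orbit T '' (A \ F)).ncard := by
    rw [← Set.inter_union_sdiff A F, Set.image_union, Set.inter_union_sdiff]
    refine (Set.ncard_union_le _ _).trans ?_
    gcongr
    exact Set.ncard_image_le (hfin.inter_of_left F)
  have hsplit : (A ∩ F).ncard + (A \ F).ncard = A.ncard :=
    Set.ncard_inter_add_ncard_sdiff_eq_ncard A F hfin
  omega

/-- An element of `P` fixing all `T`-orbits of points moved by `P` is in the kernel, by coprimality,
so that `index_pow_le_of_isPGroup` applies to the action of `P` on the set of these orbits. -/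
theorem prime_mul_le_ncard_image_orbit {p b : ℕ} [Fact p.Prime] [Finite D] [Finite α]
    {P T N : Subgroup D} (hP : IsPGroup p P) (hcop : (Nat.card P).Coprime (Nat.card T))
    (hPT : ∀ x ∈ P, ∀ t ∈ T, Commute x t) (hN : commutator D ≤ N) (hker : actionKernel D α ≤ N)
    (hb : p ^ b ∣ N.relIndex P) :
    p * b ≤ (MulAction.orbit T '' (MulAction.fixedPoints P α)ᶜ).ncard := by
  have hp : p.Prime := Fact.out
  obtain ⟨s, hs⟩ : ∃ s, N.relIndex P = p ^ s := hP.index _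
  have hbs : b ≤ s := (Nat.pow_dvd_pow_iff_le_right hp.one_lt).1 (hs ▸ hb)
  refine (Nat.mul_le_mul_left p hbs).trans ?_
  rw [← Nat.pow_le_pow_iff_right hp.one_lt, mul_comm, pow_mul, ← hs]
  refine index_pow_le_of_isPGroup hP (commutator_le_subgroupOf hN P) (Set.toFinite _) ?_ ?_
  · rintro ⟨g, hg⟩ _ ⟨a, ha, rfl⟩
    exact ⟨g • a, smul_mem_compl_fixedPoints (Subgroup.le_normalizer hg) ha,
      (smul_orbit_of_commute (hPT g hg) a).symm⟩
  rintro ⟨x, hx⟩ hfix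
  refine Subgroup.mem_subgroupOf.2 (hker (mem_actionKernel.2 fun a => ?_))
  by_cases ha : a ∈ MulAction.fixedPoints P α
  · exact ha ⟨x, hx⟩
  have horb : x • MulAction.orbit T a = MulAction.orbit T a :=
    (mem_fixingSubgroup_iff P).1 hfix _ ⟨a, ha, rfl⟩
  rw [smul_orbit_of_commute (hPT x hx), MulAction.orbit_eq_iff] at horb
  obtain ⟨⟨t, ht⟩, hta⟩ := horb
  exact smul_eq_of_coprime_orderOf (hPT x hx t ht)
    (hcop.of_dvd (P.orderOf_dvd_natCard hx) (T.orderOf_dvd_natCard ht)) hta.symm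

theorem pow_dvd_relIndex_sylow [Finite D] {p c : ℕ} [Fact p.Prime] {N : Subgroup D} [N.Normal]
    (P : Sylow p D) (h : p ^ c ∣ N.index) : p ^ c ∣ N.relIndex P := by
  have hp : p.Prime := Fact.out
  rw [← Subgroup.relIndex_mul_index (le_sup_right : N ≤ (P : Subgroup D) ⊔ N),
    Subgroup.relIndex_sup_right] at h
  refine (Nat.Coprime.pow_left c (hp.coprime_iff_not_dvd.2 fun hdvd => ?_)).dvd_of_dvd_mul_right h
  exact P.not_dvd_index (hdvd.trans (Subgroup.index_dvd_of_le le_sup_left))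

/-- A point moved by both `P` and `Q` has weight one half in the estimate for each of them. -/
theorem mul_add_mul_le_card_of_commute [Finite D] [Finite α] {p q a b : ℕ} [Fact p.Prime]
    [Fact q.Prime] {P Q N : Subgroup D} (hP : IsPGroup p P) (hQ : IsPGroup q Q)
    (hpq : p ≠ q) (hPQ : ∀ x ∈ P, ∀ y ∈ Q, Commute x y) (hN : commutator D ≤ N)
    (hker : actionKernel D α ≤ N) (ha : p ^ a ∣ N.relIndex P) (hb : q ^ b ∣ N.relIndex Q) :
    p * a + q * b ≤ Nat.card α := by
  have hcop : (Nat.card P).Coprime (Nat.card Q) := IsPGroup.coprime_card_of_ne p q hpq P Q hP hQ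
  have hQP : ∀ y ∈ Q, ∀ x ∈ P, Commute y x := fun y hy x hx => (hPQ x hx y hy).symm
  have hPnorm : P ≤ Subgroup.normalizer Q := fun x hx =>
    Subgroup.centralizer_le_normalizer _ (Subgroup.mem_centralizer_iff.2 fun y hy => hQP y hy x hx)
  have hQnorm : Q ≤ Subgroup.normalizer P := fun y hy =>
    Subgroup.centralizer_le_normalizer _ (Subgroup.mem_centralizer_iff.2 fun x hx => hPQ x hx y hy)
  set U := MulAction.fixedPoints P α
  set V := MulAction.fixedPoints Q α
  have hPorbits := prime_mul_le_ncard_image_orbit (α := α) hP hcop hPQ hN hker ha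
  have hQorbits := prime_mul_le_ncard_image_orbit (α := α) hQ hcop.symm hQP hN hker hb
  have hPcount : 2 * (MulAction.orbit Q '' Uᶜ).ncard ≤ Uᶜ.ncard + (Uᶜ ∩ V).ncard :=
    two_mul_ncard_image_orbit_le Uᶜ.toFinite fun y hy _ => smul_mem_compl_fixedPoints (hQnorm hy)
  have hQcount : 2 * (MulAction.orbit P '' Vᶜ).ncard ≤ Vᶜ.ncard + (Vᶜ ∩ U).ncard :=
    two_mul_ncard_image_orbit_le Vᶜ.toFinite fun x hx _ => smul_mem_compl_fixedPoints (hPnorm hx)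
  have hU : Uᶜ.ncard + (Vᶜ ∩ U).ncard ≤ Nat.card α := by
    rw [← Set.ncard_add_ncard_compl U, add_comm]
    exact Nat.add_le_add_right (Set.ncard_le_ncard Set.inter_subset_right) _
  have hV : Vᶜ.ncard + (Uᶜ ∩ V).ncard ≤ Nat.card α := by
    rw [← Set.ncard_add_ncard_compl V, add_comm]
    exact Nat.add_le_add_right (Set.ncard_le_ncard Set.inter_subset_right) _
  linarith

theorem mul_add_mul_le_card_of_isNilpotent [Finite D] [Finite α] [hnil : Group.IsNilpotent D]
    {p q a b : ℕ} [Fact p.Prime] [Fact q.Prime] (hpq : p ≠ q) {N : Subgroup D}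
    (hN : commutator D ≤ N) (hker : actionKernel D α ≤ N)
    (ha : p ^ a ∣ N.index) (hb : q ^ b ∣ N.index) : p * a + q * b ≤ Nat.card α := by
  have : N.Normal := Subgroup.Normal.of_commutator_le D hN
  obtain ⟨P⟩ : Nonempty (Sylow p D) := inferInstance
  obtain ⟨Q⟩ : Nonempty (Sylow q D) := inferInstance
  have hnormal : ∀ (r : ℕ) (_ : Fact r.Prime) (R : Sylow r D), R.Normal :=
    ((Group.isNilpotent_of_finite_tfae (G := D)).out 0 3).1 hnil
  refine mul_add_mul_le_card_of_commute P.isPGroup' Q.isPGroup' hpq ?_ hN hker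
    (pow_dvd_relIndex_sylow P ha) (pow_dvd_relIndex_sylow Q hb)
  exact fun x hx y hy => Subgroup.commute_of_normal_of_disjoint _ _ (hnormal p ‹_› P)
    (hnormal q ‹_› Q) (IsPGroup.disjoint_of_ne p q hpq _ _ P.isPGroup' Q.isPGroup') x y hx hy

/-- A minimal supplement `Y` works: each maximal subgroup of `Y` contains `N ⊓ Y`, hence all
commutators of `Y`, and so is normal in `Y`. -/
theorem exists_sup_eq_top_isNilpotent [Finite D] {N : Subgroup D} (hN : commutator D ≤ N) :
    ∃ Y : Subgroup D, Y ⊔ N = ⊤ ∧ Group.IsNilpotent Y := by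
  obtain ⟨Y, hY⟩ := (Set.toFinite {Y : Subgroup D | Y ⊔ N = ⊤}).exists_minimal ⟨⊤, top_sup_eq N⟩
  refine ⟨Y, hY.1, ((Group.isNilpotent_of_finite_tfae (G := Y)).out 0 2).2 fun H hH => ?_⟩
  refine Subgroup.Normal.of_commutator_le _ ((commutator_le_subgroupOf hN Y).trans ?_)
  by_contra hNH
  have hsup : H ⊔ N.subgroupOf Y = ⊤ := hH.2 _ (left_lt_sup.2 hNH)
  have hYle : Y ≤ H.map Y.subtype ⊔ N := by
    have hmap := congrArg (Subgroup.map Y.subtype) hsup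
    rw [Subgroup.map_sup, ← MonoidHom.range_eq_map, Subgroup.range_subtype,
      Subgroup.subgroupOf_map_subtype] at hmap
    exact hmap.ge.trans (sup_le_sup_left inf_le_left _)
  have hYH : Y ≤ H.map Y.subtype :=
    hY.2 (top_le_iff.1 (hY.1.ge.trans (sup_le hYle le_sup_right))) (Subgroup.map_subtype_le H)
  refine hH.1 ?_
  rw [← Subgroup.comap_map_eq_self_of_injective Y.subtype_injective H]
  exact Subgroup.subgroupOf_eq_top.2 hYH

theorem mul_add_mul_le_card [Finite D] [Finite α] {p q a b : ℕ} [Fact p.Prime] [Fact q.Prime]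
    (hpq : p ≠ q) {N : Subgroup D} (hN : commutator D ≤ N) (hker : actionKernel D α ≤ N)
    (ha : p ^ a ∣ N.index) (hb : q ^ b ∣ N.index) : p * a + q * b ≤ Nat.card α := by
  have : N.Normal := Subgroup.Normal.of_commutator_le D hN
  obtain ⟨Y, hYN, hnil⟩ := exists_sup_eq_top_isNilpotent hN
  have hindex : (N.subgroupOf Y).index = N.index := by
    rw [← Subgroup.relIndex, ← Subgroup.relIndex_sup_right Y N, hYN, Subgroup.relIndex_top_right]
  refine mul_add_mul_le_card_of_isNilpotent hpq (commutator_le_subgroupOf hN Y) ?_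
    (hindex ▸ ha) (hindex ▸ hb)
  rw [actionKernel_subgroup]
  exact Subgroup.comap_mono hker

end AbelianQuotient

/-! ### Groups with small orbits -/

theorem exists_index_eq_prime_pow {G : Type*} [Group G] [Finite G] {p : ℕ} [Fact p.Prime]
    {N : Subgroup G} [N.Normal] (h : ∀ g : G, g ^ p ∈ N) : ∃ s, N.index = p ^ s := by
  refine IsPGroup.iff_card.1 fun x => ?_
  induction x using QuotientGroup.induction_on with
  | H g => exact ⟨1, by rw [pow_one, ← QuotientGroup.mk_pow, (QuotientGroup.eq_one_iff _).2 (h g)]⟩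

theorem pow_three_eq_one_of_mem_alternatingGroup {X : Type*} [Fintype X] [DecidableEq X]
    (hX : Nat.card X ≤ 3) {σ : Equiv.Perm X} (hσ : σ ∈ alternatingGroup X) : σ ^ 3 = 1 := by
  rcases subsingleton_or_nontrivial X with _ | _
  · exact Subsingleton.elim _ _
  have hcard : Nat.card (alternatingGroup X) ∣ 3 := by
    have hX' : 1 < Nat.card X := Finite.one_lt_card
    rw [nat_card_alternatingGroup]
    interval_cases Nat.card X <;> decide
  exact orderOf_dvd_iff_pow_eq_one.1 (((alternatingGroup X).orderOf_dvd_natCard hσ).trans hcard)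

theorem smul_eq_smul_of_toPermHom_orbit_eq {G Ω : Type*} [Group G] [MulAction G Ω] {x : Ω} {g h : G}
    (hgh : MulAction.toPermHom G (MulAction.orbit G x) g
      = MulAction.toPermHom G (MulAction.orbit G x) h) : g • x = h • x :=
  congrArg Subtype.val
    (DFunLike.congr_fun hgh (⟨x, MulAction.mem_orbit_self x⟩ : MulAction.orbit G x))

section SmallOrbits

variable {G Ω : Type*} [Group G] [Finite G] [MulAction G Ω]

open Classical in
/-- The sign of the permutation that an element of `G` induces on the orbit of `x`. -/
noncomputable def orbitSign (x : Ω) : G →* ℤˣ :=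
  letI := (Finite.finite_mulAction_orbit (M := G) x).fintype
  Equiv.Perm.sign.comp (MulAction.toPermHom G (MulAction.orbit G x))

/-- The subgroup of those elements of `G` that induce an even permutation on the orbit of each point
of `S`. -/
noncomputable def evenOn (G : Type*) {Ω : Type*} [Group G] [Finite G] [MulAction G Ω] (S : Set Ω) :
    Subgroup G :=
  (MonoidHom.pi fun x : S => orbitSign (G := G) (x : Ω)).ker

theorem mem_evenOn {S : Set Ω} {g : G} : g ∈ evenOn G S ↔ ∀ x ∈ S, orbitSign x g = 1 := by
  simp [evenOn, MonoidHom.mem_ker, funext_iff]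

instance evenOn_normal (S : Set Ω) : (evenOn G S).Normal :=
  MonoidHom.normal_ker _

theorem evenOn_anti {S T : Set Ω} (h : S ⊆ T) : evenOn G T ≤ evenOn G S := fun _ hg =>
  mem_evenOn.2 fun x hx => mem_evenOn.1 hg x (h hx)

theorem commutator_le_evenOn (S : Set Ω) : commutator G ≤ evenOn G S :=
  Abelianization.commutator_subset_ker _

theorem actionKernel_le_evenOn (S : Set Ω) : actionKernel G Ω ≤ evenOn G S := by
  refine fun g hg => mem_evenOn.2 fun x _ => ?_
  have hone : MulAction.toPermHom G (MulAction.orbit G x) g = 1 := by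
    ext y
    exact mem_actionKernel.1 hg y
  rw [orbitSign, MonoidHom.comp_apply, hone, map_one]

theorem exists_index_evenOn_eq_two_pow (S : Set Ω) : ∃ r, (evenOn G S).index = 2 ^ r :=
  exists_index_eq_prime_pow fun g => mem_evenOn.2 fun x _ => by rw [map_pow, Int.units_sq]

theorem index_evenOn_dvd_two_pow (S : Finset Ω) : (evenOn G (S : Set Ω)).index ∣ 2 ^ S.card := by
  rw [evenOn, Subgroup.index_ker]
  refine (Subgroup.card_subgroup_dvd_card _).trans (dvd_of_eq ?_)
  simp [Nat.card_fun]

theorem commutatorElement_smul_of_mem_evenOn {S : Set Ω} {x : Ω} (hxS : x ∈ S)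
    (hx : (MulAction.orbit G x).ncard ≤ 3) {g h : G} (hg : g ∈ evenOn G S) (hh : h ∈ evenOn G S) :
    ⁅g, h⁆ • x = x := by
  classical
  let := (Finite.finite_mulAction_orbit (M := G) x).fintype
  have hcomm := (alternatingGroup.isMulCommutative_of_card_le_three hx).is_comm.comm
    (⟨_, mem_evenOn.1 hg x hxS⟩ : alternatingGroup (MulAction.orbit G x))
    ⟨_, mem_evenOn.1 hh x hxS⟩
  rw [smul_eq_smul_of_toPermHom_orbit_eq (h := 1), one_smul]
  rw [map_commutatorElement, map_one, commutatorElement_eq_one_iff_mul_comm]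
  exact congrArg Subtype.val hcomm

theorem pow_three_smul_of_mem_evenOn {S : Set Ω} {x : Ω} (hxS : x ∈ S)
    (hx : (MulAction.orbit G x).ncard ≤ 3) {g : G} (hg : g ∈ evenOn G S) : g ^ 3 • x = x := by
  classical
  let := (Finite.finite_mulAction_orbit (M := G) x).fintype
  rw [smul_eq_smul_of_toPermHom_orbit_eq (h := 1), one_smul]
  rw [map_pow, map_one]
  exact pow_three_eq_one_of_mem_alternatingGroup hx (mem_evenOn.1 hg x hxS)

theorem exists_relIndex_evenOn_univ_eq_three_pow
    (horb : ∀ x : Ω, (MulAction.orbit G x).ncard ≤ 3) :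
    ∃ s, (actionKernel G Ω).relIndex (evenOn G (Set.univ : Set Ω)) = 3 ^ s :=
  exists_index_eq_prime_pow fun g => Subgroup.mem_subgroupOf.2 (mem_actionKernel.2 fun x =>
    pow_three_smul_of_mem_evenOn (Set.mem_univ x) (horb x) g.2)

theorem commutator_evenOn_le (horb : ∀ x : Ω, (MulAction.orbit G x).ncard ≤ 3) {S : Set Ω}
    (hS : fixingSubgroup (evenOn G (Set.univ : Set Ω)) S ≤ actionKernel _ Ω) :
    commutator (evenOn G S) ≤ (actionKernel G Ω).subgroupOf (evenOn G S) := by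
  rw [commutator_def, Subgroup.commutator_le]
  rintro ⟨g, hg⟩ - ⟨h, hh⟩ -
  refine Subgroup.mem_subgroupOf.2 ?_
  rw [fixingSubgroup_subgroup, actionKernel_subgroup] at hS
  have heven : ⁅g, h⁆ ∈ evenOn G (Set.univ : Set Ω) := commutator_le_evenOn _
    (Subgroup.commutator_mem_commutator (Subgroup.mem_top g) (Subgroup.mem_top h))
  refine hS (x := ⟨⁅g, h⁆, heven⟩) ((mem_fixingSubgroup_iff G).2 fun x hx => ?_)
  exact commutatorElement_smul_of_mem_evenOn hx (horb x) hg hh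

/-- The elements that are even on all orbits induce a group of order `3 ^ s`, which has a base of
`s` points. The elements that are even on the orbits of these points have index at most `2 ^ s` and
induce an abelian group, to which `mul_add_mul_le_card` applies. -/
theorem index_actionKernel_of_orbits_le_three {α : Type*} [Finite α] [MulAction G α]
    (hker : actionKernel G α ≤ actionKernel G Ω)
    (horb : ∀ x : Ω, (MulAction.orbit G x).ncard ≤ 3) :
    ∃ r s, (actionKernel G Ω).index = 2 ^ r * 3 ^ s ∧ 2 * r + s ≤ Nat.card α := by
  have : Fact (Nat.Prime 2) := ⟨Nat.prime_two⟩
  have : Fact (Nat.Prime 3) := ⟨Nat.prime_three⟩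
  set K := actionKernel G Ω
  set V := evenOn G (Set.univ : Set Ω)
  obtain ⟨s, hs⟩ : ∃ s, K.relIndex V = 3 ^ s := exists_relIndex_evenOn_univ_eq_three_pow horb
  obtain ⟨S, hSs, hS⟩ : HasBase V Ω s := by
    have h := hasBase_cardFactors (G := V) (Ω := Ω)
    rwa [actionKernel_subgroup, ← Subgroup.relIndex, hs,
      ArithmeticFunction.cardFactors_apply_prime_pow Nat.prime_three] at h
  set D := evenOn G (S : Set Ω)
  have hKV : K ≤ V := actionKernel_le_evenOn _
  have hVD : V ≤ D := evenOn_anti (Set.subset_univ _)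
  obtain ⟨r, hr⟩ : ∃ r, V.index = 2 ^ r := exists_index_evenOn_eq_two_pow _
  obtain ⟨r₂, hr₂s, hr₂⟩ : ∃ r₂ ≤ S.card, D.index = 2 ^ r₂ :=
    (Nat.dvd_prime_pow Nat.prime_two).1 (index_evenOn_dvd_two_pow S)
  obtain ⟨r₁, -, hr₁⟩ : ∃ r₁ ≤ r, V.relIndex D = 2 ^ r₁ :=
    (Nat.dvd_prime_pow Nat.prime_two).1 (hr ▸ Dvd.intro _ (Subgroup.relIndex_mul_index hVD))
  have hsum : r₁ + r₂ = r := by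
    refine Nat.pow_right_injective le_rfl ?_
    simp only [pow_add, ← hr₁, ← hr₂, ← hr, Subgroup.relIndex_mul_index hVD]
  have hKD : K.relIndex D = 3 ^ s * 2 ^ r₁ := by
    rw [← Subgroup.relIndex_mul_relIndex K V D hKV hVD, hs, hr₁]
  have hcard : 2 * r₁ + 3 * s ≤ Nat.card α :=
    mul_add_mul_le_card (by norm_num) (commutator_evenOn_le horb hS)
      ((actionKernel_subgroup_mono hker D).trans_eq (actionKernel_subgroup D))
      (Dvd.intro_left _ hKD.symm) (Dvd.intro _ hKD.symm)
  refine ⟨r, s, ?_, by omega⟩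
  rw [← Subgroup.relIndex_mul_index hKV, hs, hr, mul_comm]

theorem hasBase_log_sixteen_of_orbits_le_three {α : Type*} [Finite α] [MulAction G α]
    (hker : actionKernel G α ≤ actionKernel G Ω)
    (horb : ∀ x : Ω, (MulAction.orbit G x).ncard ≤ 3) :
    HasBase G Ω (Nat.log 16 ((actionKernel G Ω).index ^ 2 * 2 ^ Nat.card α)) := by
  obtain ⟨r, s, hrs, hn⟩ := index_actionKernel_of_orbits_le_three hker horb
  have hbase : HasBase G Ω (r + s) := by
    have h := hasBase_cardFactors (G := G) (Ω := Ω)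
    rwa [hrs, ArithmeticFunction.cardFactors_mul (by positivity) (by positivity),
      ArithmeticFunction.cardFactors_apply_prime_pow Nat.prime_two,
      ArithmeticFunction.cardFactors_apply_prime_pow Nat.prime_three] at h
  refine hbase.mono (Nat.le_log_of_pow_le (by norm_num) ?_)
  rw [hrs]
  calc 16 ^ (r + s) = 16 ^ r * 16 ^ s := pow_add _ _ _
    _ ≤ 16 ^ r * 18 ^ s := by gcongr; norm_num
    _ = (2 ^ 4) ^ r * (2 * 3 ^ 2) ^ s := by norm_num
    _ = (2 ^ r * 3 ^ s) ^ 2 * 2 ^ (2 * r + s) := by simp only [mul_pow, ← pow_mul]; ring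
    _ ≤ (2 ^ r * 3 ^ s) ^ 2 * 2 ^ Nat.card α := by gcongr; norm_num

end SmallOrbits

/-- Points in orbits of size at least `4` are taken greedily: each of them divides the order of the
induced group by at least `4`. -/
theorem hasBase_log_sixteen {G Ω α : Type*} [Group G] [Finite G] [MulAction G Ω] [Finite α]
    [MulAction G α] (hker : actionKernel G α ≤ actionKernel G Ω) :
    HasBase G Ω (Nat.log 16 ((actionKernel G Ω).index ^ 2 * 2 ^ Nat.card α)) := by
  induction hq : (actionKernel G Ω).index using Nat.strong_induction_on generalizing G with
  | _ q ih =>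
  by_cases horb : ∀ x : Ω, (MulAction.orbit G x).ncard ≤ 3
  · exact hq ▸ hasBase_log_sixteen_of_orbits_le_three hker horb
  push Not at horb
  obtain ⟨ω, hω⟩ := horb
  set m := (actionKernel (MulAction.stabilizer G ω) Ω).index
  have hmul : m * (MulAction.orbit G ω).ncard = q := hq ▸ index_actionKernel_stabilizer_mul ω
  have hlt : m < q := hq ▸ index_actionKernel_stabilizer_lt (by omega)
  refine ((ih m hlt (actionKernel_subgroup_mono hker _) rfl).of_stabilizer ω).mono ?_
  refine Nat.le_log_of_pow_le (by norm_num) ?_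
  have hm0 : m ≠ 0 := Subgroup.index_ne_zero_of_finite
  calc 16 ^ (Nat.log 16 (m ^ 2 * 2 ^ Nat.card α) + 1)
      ≤ m ^ 2 * 2 ^ Nat.card α * 4 ^ 2 := by
        rw [pow_succ]
        gcongr
        · exact Nat.pow_log_le_self _ (by positivity)
        · norm_num
    _ = (m * 4) ^ 2 * 2 ^ Nat.card α := by ring
    _ ≤ q ^ 2 * 2 ^ Nat.card α := by
        rw [← hmul]
        gcongr
        exact hω

/-! ### Bases of primitive groups -/

theorem commutator_eq_swap_mul_swap {α : Type*} [DecidableEq α] {σ τ : Equiv.Perm α} {d : α}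
    (hσ : σ d ≠ d) (hτ : τ d ≠ d) (hne : σ d ≠ τ d) (h : ∀ a ≠ d, σ a = a ∨ τ a = a) :
    ⁅σ, τ⁆ = Equiv.swap d (τ d) * Equiv.swap d (σ d) := by
  have hσfix {a : α} (ha : σ a = a ∨ a = d) (had : τ a ≠ d) : σ (τ a) = τ a := by
    rcases h _ had with hfix | hfix
    · exact hfix
    · rw [τ.injective hfix] at had ⊢
      exact ha.resolve_right had
  have hτfix {a : α} (ha : τ a = a ∨ a = d) (had : σ a ≠ d) : τ (σ a) = σ a := by
    rcases h _ had with hfix | hfix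
    · rw [σ.injective hfix] at had ⊢
      exact ha.resolve_right had
    · exact hfix
  rw [commutatorElement_def, mul_inv_eq_iff_eq_mul, mul_inv_eq_iff_eq_mul]
  ext z
  simp only [Equiv.Perm.mul_apply]
  by_cases hzd : z = d
  · rw [hzd, hσfix (.inr rfl) hτ, hτfix (.inr rfl) hσ, Equiv.swap_apply_right,
      Equiv.swap_apply_left]
  rcases h z hzd with hσz | hτz
  · rw [hσz]
    by_cases hτz : τ z = d
    · rw [hτz, Equiv.swap_apply_left, Equiv.swap_apply_of_ne_of_ne hσ hne]
    · have hfix := hσfix (.inl hσz) hτz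
      have hne' : τ z ≠ σ d := fun heq => hτz (σ.injective (hfix.trans heq))
      rw [hfix, Equiv.swap_apply_of_ne_of_ne hτz hne',
        Equiv.swap_apply_of_ne_of_ne hτz (τ.injective.ne hzd)]
  · rw [hτz]
    by_cases hσz : σ z = d
    · rw [hσz, Equiv.swap_apply_of_ne_of_ne hτ hne.symm, Equiv.swap_apply_right]
    · have hfix := hτfix (.inl hτz) hσz
      have hne' : σ z ≠ τ d := fun heq => hσz (τ.injective (hfix.trans heq))
      rw [hfix, Equiv.swap_apply_of_ne_of_ne hσz (σ.injective.ne hzd),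
        Equiv.swap_apply_of_ne_of_ne hσz hne']

theorem isThreeCycle_commutator {α : Type*} [Fintype α] [DecidableEq α] {σ τ : Equiv.Perm α} {d : α}
    (hσ : σ d ≠ d) (hτ : τ d ≠ d) (h : ∀ a ≠ d, σ a = a ∨ τ a = a) :
    Equiv.Perm.IsThreeCycle ⁅σ, τ⁆ := by
  have hne : σ d ≠ τ d := fun heq => by
    rcases h _ hσ with hfix | hfix
    · exact hσ (σ.injective hfix)
    · exact hτ (τ.injective (heq ▸ hfix))
  rw [commutator_eq_swap_mul_swap hσ hτ hne h]
  exact Equiv.Perm.isThreeCycle_swap_mul_swap_same hτ.symm hσ.symm hne.symm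

theorem alternatingGroup_le_range_toPermHom {G α : Type*} [Group G] [Fintype α] [DecidableEq α]
    [MulAction G α] [MulAction.IsPreprimitive G α] {x y : G} {d : α} (hx : x • d ≠ d)
    (hy : y • d ≠ d) (h : ∀ a ≠ d, x • a = a ∨ y • a = a) :
    alternatingGroup α ≤ (MulAction.toPermHom G α).range := by
  have hprim : MulAction.IsPreprimitive (MulAction.toPermHom G α).range α :=
    .of_surjective (M := G) (α := α)
      (f := (⟨id, fun _ _ => rfl⟩ : α →ₑ[(MulAction.toPermHom G α).rangeRestrict] α))
      Function.surjective_id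
  exact Equiv.Perm.alternatingGroup_le_of_isPreprimitive_of_isThreeCycle_mem hprim
    (isThreeCycle_commutator (σ := MulAction.toPermHom G α x) (τ := MulAction.toPermHom G α y)
      hx hy h) ⟨⁅x, y⁆, map_commutatorElement _ _ _⟩

/-- Bochert's argument. For a minimum base `Δ` with more than half of the points, neither the
complement of `Δ` nor `Δ` minus a point `d` is a base. This gives two elements whose supports meet
in `d` alone, and their commutator is a 3-cycle. -/
theorem hasBase_half_card {G α : Type*} [Group G] [Fintype α] [DecidableEq α] [MulAction G α]
    [MulAction.IsPreprimitive G α]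
    (hA : ¬ alternatingGroup α ≤ (MulAction.toPermHom G α).range) :
    HasBase G α (Nat.card α / 2) := by
  classical
  obtain ⟨Δ, hΔ, hmin⟩ := (Set.toFinite
    {Δ : Finset α | fixingSubgroup G (Δ : Set α) ≤ actionKernel G α}).exists_minimalFor
      Finset.card _
      ⟨Finset.univ, fun g hg => mem_actionKernel.2 fun a =>
        (mem_fixingSubgroup_iff G).1 hg a (Finset.mem_coe.2 (Finset.mem_univ a))⟩
  refine ⟨Δ, ?_, hΔ⟩
  by_contra! hlt
  have hsmall {E : Finset α} (hE : E.card < Δ.card) :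
      ∃ g : G, (∀ a ∈ E, g • a = a) ∧ ∃ d : α, g • d ≠ d := by
    by_contra! h
    have hE' : fixingSubgroup G (E : Set α) ≤ actionKernel G α := fun g hg =>
      mem_actionKernel.2 (h g ((mem_fixingSubgroup_iff G).1 hg))
    exact hE.not_ge (hmin hE' hE.le)
  obtain ⟨y, hy, d, hyd⟩ := hsmall (E := Δᶜ) (by
    rw [Finset.card_compl, ← Nat.card_eq_fintype_card]
    omega)
  have hdΔ : d ∈ Δ := by
    by_contra hd
    exact hyd (hy d (Finset.mem_compl.2 hd))
  obtain ⟨x, hx, e, hxe⟩ := hsmall (Finset.card_erase_lt_of_mem hdΔ)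
  have hxd : x • d ≠ d := by
    refine fun hxd => hxe (mem_actionKernel.1 (hΔ ?_) e)
    refine (mem_fixingSubgroup_iff G).2 fun a ha => ?_
    rcases eq_or_ne a d with rfl | had
    · exact hxd
    · exact hx a (Finset.mem_erase.2 ⟨had, ha⟩)
  have hdisj : ∀ a ≠ d, x • a = a ∨ y • a = a := by
    intro a had
    by_cases ha : a ∈ Δ
    · exact .inl (hx a (Finset.mem_erase.2 ⟨had, ha⟩))
    · exact .inr (hy a (Finset.mem_compl.2 ha))
  exact hA (alternatingGroup_le_range_toPermHom hxd hyd hdisj)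

theorem index_stabilizer_finset_le_choose {G α : Type*} [Group G] [MulAction G α] [Finite α]
    (Δ : Finset α) :
    (MulAction.stabilizer G (Δ : Set α)).index ≤ (Nat.card α).choose Δ.card := by
  classical
  let s : Set.powersetCard α Δ.card := ⟨Δ, rfl⟩
  rw [← Set.powersetCard.card]
  calc (MulAction.stabilizer G (Δ : Set α)).index = (MulAction.stabilizer G s).index :=
        congrArg _ (Set.powersetCard.stabilizer_coe s).symm
    _ = (MulAction.orbit G s).ncard := MulAction.index_stabilizer G s
    _ ≤ Nat.card (Set.powersetCard α Δ.card) := Set.ncard_le_card _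

/-! ### Arithmetic of the base bound -/

/-- The bound on base sizes proved by induction on the degree `n`. Truncated subtraction makes it
`0` for `n ≤ 1`. -/
def baseBound (n : ℕ) : ℕ := (3 * n - 4) / 2

theorem four_mul_centralBinom_le {k : ℕ} (hk : 5 ≤ k) : 4 * k.centralBinom ≤ 4 ^ k := by
  induction k, hk using Nat.le_induction with
  | base => simp [Nat.centralBinom, Nat.choose]
  | succ k _ ih =>
    have hstep : (k + 1) * (k + 1).centralBinom ≤ (k + 1) * (4 * k.centralBinom) := by
      rw [Nat.succ_mul_centralBinom_succ]
      nlinarith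
    have hstep' := Nat.le_of_mul_le_mul_left hstep k.succ_pos
    rw [pow_succ]
    omega

theorem four_mul_log_sixteen_le {m e n : ℕ} (hm : m ≤ 2 ^ e) :
    4 * Nat.log 16 (m ^ 2 * 2 ^ n) ≤ 2 * e + n := by
  rcases eq_or_ne m 0 with rfl | hm0
  · simp
  refine (Nat.pow_le_pow_iff_right one_lt_two).1 ?_
  calc 2 ^ (4 * Nat.log 16 (m ^ 2 * 2 ^ n)) = 16 ^ Nat.log 16 (m ^ 2 * 2 ^ n) := by
        rw [pow_mul]; norm_num
    _ ≤ m ^ 2 * 2 ^ n := Nat.pow_log_le_self _ (by positivity)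
    _ ≤ (2 ^ e) ^ 2 * 2 ^ n := by gcongr
    _ = 2 ^ (2 * e + n) := by rw [pow_add, ← pow_mul, mul_comm e]

/-- If `2 * k < n`, the bound `n.choose k ≤ 2 ^ (n - 1)` is enough. The central binomial coefficient
needs a further factor of two, which it has for `n ≥ 10`. -/
theorem baseBound_add_log_lt {n k : ℕ} (hn : 5 ≤ n) (hk : 2 * k ≤ n) :
    baseBound k + Nat.log 16 (n.choose k ^ 2 * 2 ^ n) < baseBound n := by
  obtain ⟨m, rfl⟩ : ∃ m, n = m + 1 := ⟨n - 1, by omega⟩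
  have hlog := four_mul_log_sixteen_le (n := m + 1) (Nat.choose_succ_le_two_pow m k)
  rcases hk.lt_or_eq with hlt | heq
  · unfold baseBound
    omega
  rw [← heq] at hlog ⊢
  rcases lt_or_ge k 5 with hk5 | hk5
  · obtain rfl | rfl : k = 3 ∨ k = 4 := by omega
    · decide
    · decide
  · have hcentral : (2 * k).choose k ≤ 2 ^ (2 * k - 2) := by
      have h := four_mul_centralBinom_le hk5
      rw [Nat.centralBinom, show 4 ^ k = 4 * 2 ^ (2 * k - 2) by
        rw [show 4 = 2 ^ 2 by rfl, ← pow_mul, ← pow_add]; congr 1; omega] at h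
      omega
    have := four_mul_log_sixteen_le (n := 2 * k) hcentral
    unfold baseBound
    omega

theorem mul_baseBound_add_baseBound_lt {a b : ℕ} (ha : 2 ≤ a) (hb : 2 ≤ b) (hab : 5 ≤ a * b) :
    b * baseBound a + baseBound b < baseBound (a * b) := by
  have hfiber : 2 * (b * baseBound a) + 4 * b ≤ 3 * (a * b) := by
    have h : 2 * baseBound a + 4 ≤ 3 * a := by
      unfold baseBound
      omega
    nlinarith
  rcases hb.eq_or_lt with rfl | hb3
  · simp only [baseBound] at *
    omega
  · generalize b * baseBound a = u at *
    generalize a * b = n at *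
    unfold baseBound
    omega

/-! ### Induction on the degree -/

universe u v w

/-- The bound `baseBound n` holds for every finite group `G` acting on `Ω` and on a set of `n`
points such that elements fixing all of these points act trivially on `Ω`. -/
def BoundHolds (Ω : Type w) (n : ℕ) : Prop :=
  ∀ (G : Type u) [Group G] [Finite G] [MulAction G Ω] (α : Type v) [Finite α] [MulAction G α],
    Nat.card α = n → actionKernel G α ≤ actionKernel G Ω → HasBase G Ω (baseBound n)

section Induction

variable {Ω : Type w} {α : Type v} {G : Type u} [Group G] [Finite G] [MulAction G Ω] [MulAction G α]

theorem BoundHolds.hasBase_of_fixingSubgroup_le {A : Set α} (h : BoundHolds.{u, v} Ω A.ncard)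
    (hfin : A.Finite) (hA : ∀ g : G, ∀ a ∈ A, g • a ∈ A)
    (hfix : fixingSubgroup G A ≤ actionKernel G Ω) : HasBase G Ω (baseBound A.ncard) := by
  let S : SubMulAction G α := ⟨A, fun g _ ha => hA g _ ha⟩
  have : Finite S := hfin
  exact h G S rfl ((actionKernel_subMulAction S).trans_le hfix)

theorem BoundHolds.hasBase_add {A : Set α} {c : ℕ} (h : BoundHolds.{u, v} Ω A.ncard)
    (hfin : A.Finite) (hA : ∀ g : G, ∀ a ∈ A, g • a ∈ A)
    (hbase : HasBase (fixingSubgroup G A) Ω c) : HasBase G Ω (c + baseBound A.ncard) := by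
  refine hbase.add_of_inf_le _ fun X hX =>
    h.hasBase_of_fixingSubgroup_le hfin (fun g => hA g) ?_
  rw [fixingSubgroup_subgroup, actionKernel_subgroup]
  exact fun g hg => hX (Subgroup.mem_inf.2 ⟨g.2, hg⟩)

theorem hasBase_sum_baseBound (t : Finset (Set α)) (hfin : ∀ A ∈ t, A.Finite)
    (ht : ∀ A ∈ t, BoundHolds.{u, v} Ω A.ncard) (hinv : ∀ A ∈ t, ∀ g : G, ∀ a ∈ A, g • a ∈ A)
    (hfix : fixingSubgroup G (⋃ A ∈ t, A) ≤ actionKernel G Ω) :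
    HasBase G Ω (∑ A ∈ t, baseBound A.ncard) := by
  classical
  induction t using Finset.induction_on generalizing G with
  | empty =>
    refine hasBase_zero_of_actionKernel_eq_top (top_le_iff.1 (le_trans ?_ hfix))
    simp
  | insert A t hAt ih =>
    simp only [Finset.forall_mem_insert] at hfin ht hinv
    rw [Finset.sum_insert hAt, add_comm]
    refine ht.1.hasBase_add hfin.1 hinv.1 (ih hfin.2 ht.2 (fun B hB g => hinv.2 B hB g) ?_)
    rw [fixingSubgroup_subgroup, actionKernel_subgroup]
    intro g hg
    refine hfix ?_
    rw [Finset.set_biUnion_insert, fixingSubgroup_union]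
    exact Subgroup.mem_inf.2 ⟨g.2, hg⟩

theorem exists_hasBase_lt_of_notMem_orbit [Finite α] (hn : 5 ≤ Nat.card α)
    (ih : ∀ m < Nat.card α, BoundHolds.{u, v} Ω m) (hker : actionKernel G α ≤ actionKernel G Ω)
    {a b : α} (hab : b ∉ MulAction.orbit G a) :
    ∃ c < baseBound (Nat.card α), HasBase G Ω c := by
  set A := MulAction.orbit G a
  have hsum : A.ncard + Aᶜ.ncard = Nat.card α := Set.ncard_add_ncard_compl _
  have hA : 0 < A.ncard := (Set.ncard_pos (Set.toFinite _)).2 ⟨a, MulAction.mem_orbit_self a⟩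
  have hAc : 0 < Aᶜ.ncard := (Set.ncard_pos (Set.toFinite _)).2 ⟨b, hab⟩
  have hbase : HasBase (fixingSubgroup G Aᶜ) Ω (baseBound A.ncard) := by
    refine (ih _ (by omega)).hasBase_of_fixingSubgroup_le (Set.toFinite _)
      (fun g x hx => (smul_mem_orbit_iff (g : G)).2 hx) ?_
    rw [fixingSubgroup_subgroup, actionKernel_subgroup]
    refine fun g hg => hker (mem_actionKernel.2 fun x => ?_)
    by_cases hx : x ∈ A
    · exact (mem_fixingSubgroup_iff G).1 hg x hx
    · exact (mem_fixingSubgroup_iff G).1 g.2 x hx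
  refine ⟨_, ?_, (ih Aᶜ.ncard (by omega)).hasBase_add (Set.toFinite _)
    (fun g x hx => mt (smul_mem_orbit_iff g).1 hx) hbase⟩
  unfold baseBound
  omega

/-- A base for the kernel of the action on the set of blocks comes from the single blocks, and is
combined with one coming from the action on the set of blocks. -/
theorem exists_hasBase_lt_of_isBlock [Finite α] [MulAction.IsPretransitive G α]
    (hn : 5 ≤ Nat.card α) (ih : ∀ m < Nat.card α, BoundHolds.{u, v} Ω m)
    (hker : actionKernel G α ≤ actionKernel G Ω) {B : Set α} (hB : MulAction.IsBlock G B)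
    (hnontriv : ¬ MulAction.IsTrivialBlock B) :
    ∃ c < baseBound (Nat.card α), HasBase G Ω c := by
  rw [MulAction.IsTrivialBlock, not_or, Set.not_subsingleton_iff] at hnontriv
  obtain ⟨b, hb⟩ := hnontriv.1.nonempty
  set 𝓑 := MulAction.orbit G B
  have hmul : B.ncard * 𝓑.ncard = Nat.card α := hB.ncard_block_mul_ncard_orbit_eq ⟨b, hb⟩
  have hB2 : 2 ≤ B.ncard := (Set.one_lt_ncard (Set.toFinite _)).2 hnontriv.1
  have hBn : B.ncard < Nat.card α := Set.ncard_lt_card hnontriv.2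
  have h𝓑2 : 2 ≤ 𝓑.ncard := by
    by_contra! hlt
    interval_cases 𝓑.ncard <;> omega
  have h𝓑n : 𝓑.ncard < Nat.card α := by nlinarith
  have hcard : ∀ C ∈ (Set.toFinite 𝓑).toFinset, C.ncard = B.ncard := by
    simp only [Set.Finite.mem_toFinset]
    rintro _ ⟨g, rfl⟩
    exact Set.ncard_smul_set g B
  have hbase : HasBase (fixingSubgroup G 𝓑) Ω (𝓑.ncard * baseBound B.ncard) := by
    have hsum := hasBase_sum_baseBound (G := fixingSubgroup G 𝓑) (Ω := Ω)
      (Set.toFinite 𝓑).toFinset (fun C _ => Set.toFinite C)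
      (fun C hC => hcard C hC ▸ ih _ hBn) ?_ ?_
    · rwa [Finset.sum_congr rfl fun C hC => congrArg baseBound (hcard C hC), Finset.sum_const,
        smul_eq_mul, ← Set.ncard_eq_toFinset_card] at hsum
    · intro C hC g a ha
      have hgC : (g : G) • C = C :=
        (mem_fixingSubgroup_iff G).1 g.2 C ((Set.toFinite 𝓑).mem_toFinset.1 hC)
      exact hgC.subset (Set.smul_mem_smul_set ha)
    · rw [fixingSubgroup_subgroup, actionKernel_subgroup]
      refine fun g hg => hker (mem_actionKernel.2 fun x => ?_)
      obtain ⟨k, rfl⟩ := MulAction.exists_smul_eq G b x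
      refine (mem_fixingSubgroup_iff G).1 hg _ (Set.mem_biUnion ?_ (Set.smul_mem_smul_set hb))
      exact (Set.toFinite 𝓑).mem_toFinset.2 (MulAction.mem_orbit B k)
  refine ⟨_, ?_, (ih _ h𝓑n).hasBase_add (Set.toFinite 𝓑)
    (fun g C hC => (smul_mem_orbit_iff g).2 hC) hbase⟩
  rw [← hmul]
  exact mul_baseBound_add_baseBound_lt hB2 h𝓑2 (hmul ▸ hn)

/-- A base for the setwise stabiliser `K` of a small base `Δ` on `α` is combined with one for a
subgroup meeting `K` in the kernel only. The order of the group induced by such a subgroup on `Ω` is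
at most the number of images of `Δ`. -/
theorem exists_hasBase_lt_of_isPreprimitive [Fintype α] [DecidableEq α]
    [MulAction.IsPreprimitive G α] (hn : 5 ≤ Nat.card α)
    (ih : ∀ m < Nat.card α, BoundHolds.{u, v} Ω m) (hker : actionKernel G α ≤ actionKernel G Ω)
    (hA : ¬ alternatingGroup α ≤ (MulAction.toPermHom G α).range) :
    ∃ c < baseBound (Nat.card α), HasBase G Ω c := by
  obtain ⟨Δ, hcard, hΔ⟩ := hasBase_half_card hA
  have hK : HasBase (MulAction.stabilizer G (Δ : Set α)) Ω (baseBound Δ.card) := by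
    rw [← Set.ncard_coe_finset]
    refine (ih _ (by rw [Set.ncard_coe_finset]; omega)).hasBase_of_fixingSubgroup_le
      Δ.finite_toSet (fun g a ha => ?_) ?_
    · have hg : (g : G) • (Δ : Set α) = Δ := g.2
      exact hg.subset (Set.smul_mem_smul_set ha)
    · rw [fixingSubgroup_subgroup, actionKernel_subgroup]
      exact Subgroup.comap_mono (hΔ.trans hker)
  refine ⟨_, baseBound_add_log_lt hn (k := Δ.card) (by omega), hK.add_of_inf_le _ fun X hX => ?_⟩
  refine (hasBase_log_sixteen (α := α) (actionKernel_subgroup_mono hker X)).mono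
    (Nat.log_mono_right ?_)
  gcongr
  exact (index_actionKernel_le_of_inf_le hX).trans (index_stabilizer_finset_le_choose Δ)

theorem exists_hasBase_lt_of_not_alternatingGroup_le [Fintype α] [DecidableEq α]
    (hn : 5 ≤ Nat.card α) (ih : ∀ m < Nat.card α, BoundHolds.{u, v} Ω m)
    (hker : actionKernel G α ≤ actionKernel G Ω)
    (hA : ¬ alternatingGroup α ≤ (MulAction.toPermHom G α).range) :
    ∃ c < baseBound (Nat.card α), HasBase G Ω c := by
  by_cases htrans : ∀ a b : α, b ∈ MulAction.orbit G a
  · have : MulAction.IsPretransitive G α := ⟨htrans⟩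
    by_cases hblock : ∀ B : Set α, MulAction.IsBlock G B → MulAction.IsTrivialBlock B
    · have : MulAction.IsPreprimitive G α := ⟨fun {B} => hblock B⟩
      exact exists_hasBase_lt_of_isPreprimitive hn ih hker hA
    · push Not at hblock
      obtain ⟨B, hB, hnontriv⟩ := hblock
      exact exists_hasBase_lt_of_isBlock hn ih hker hB hnontriv
  · push Not at htrans
    obtain ⟨a, b, hab⟩ := htrans
    exact exists_hasBase_lt_of_notMem_orbit hn ih hker hab

theorem hasBase_baseBound_of_card_le_four [Finite α] (hn : Nat.card α ≤ 4)
    (hker : actionKernel G α ≤ actionKernel G Ω) : HasBase G Ω (baseBound (Nat.card α)) := by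
  have hindex : (actionKernel G Ω).index ≤ (Nat.card α)! :=
    Nat.le_of_dvd (Nat.factorial_pos _)
      ((Subgroup.index_dvd_of_le hker).trans index_actionKernel_dvd_factorial)
  refine hasBase_log_two.mono ((Nat.log_mono_right hindex).trans ?_)
  interval_cases Nat.card α <;> decide

/-- An element acting evenly on `α` agrees on `α`, hence on `Ω`, with an element fixing any given
point of `Ω`. -/
theorem hasBase_one_of_alternatingGroup_le [Fintype α] [DecidableEq α]
    (hker : actionKernel G α ≤ actionKernel G Ω)
    (hstab : ∀ ω : Ω, alternatingGroup α ≤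
      (MulAction.toPermHom (MulAction.stabilizer G ω) α).range) :
    HasBase G Ω 1 := by
  have heven : (Equiv.Perm.sign.comp (MulAction.toPermHom G α)).ker ≤ actionKernel G Ω := by
    refine fun g hg => mem_actionKernel.2 fun ω => ?_
    obtain ⟨h, hh⟩ := hstab ω (x := MulAction.toPermHom G α g) hg
    have hgh : g⁻¹ * (h : G) ∈ actionKernel G Ω := by
      refine hker (mem_actionKernel.2 fun a => ?_)
      rw [mul_smul, inv_smul_eq_iff]
      exact Equiv.congr_fun hh a
    have hfix := mem_actionKernel.1 hgh ω
    rwa [mul_smul, inv_smul_eq_iff, show (h : G) • ω = ω from h.2, eq_comm] at hfix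
  have hindex : (actionKernel G Ω).index ≤ 2 := by
    refine (Nat.le_of_dvd (Nat.pos_of_ne_zero Subgroup.index_ne_zero_of_finite)
      (Subgroup.index_dvd_of_le heven)).trans ?_
    rw [Subgroup.index_ker]
    exact (Subgroup.card_le_card_group _).trans (by simp)
  exact hasBase_log_two.mono (Nat.log_mono_right hindex)

end Induction

theorem boundHolds (Ω : Type w) (n : ℕ) : BoundHolds.{u, v} Ω n := by
  induction n using Nat.strong_induction_on with
  | _ n ih =>
  rintro G _ _ _ α _ _ rfl hker
  classical
  have := Fintype.ofFinite α
  rcases Nat.lt_or_ge (Nat.card α) 5 with hn | hn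
  · exact hasBase_baseBound_of_card_le_four (Nat.le_of_lt_succ hn) hker
  by_cases hA : alternatingGroup α ≤ (MulAction.toPermHom G α).range
  · by_cases hstab : ∀ ω : Ω, alternatingGroup α ≤
        (MulAction.toPermHom (MulAction.stabilizer G ω) α).range
    · refine (hasBase_one_of_alternatingGroup_le hker hstab).mono ?_
      unfold baseBound
      omega
    · push Not at hstab
      obtain ⟨ω, hω⟩ := hstab
      obtain ⟨c, hc, hbase⟩ := exists_hasBase_lt_of_not_alternatingGroup_le hn ih
        (actionKernel_subgroup_mono hker _) hω
      exact (hbase.of_stabilizer ω).mono hc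
  · obtain ⟨c, hc, hbase⟩ := exists_hasBase_lt_of_not_alternatingGroup_le hn ih hker hA
    exact hbase.mono hc.le

theorem hasBase_baseBound {Γ Ω α : Type*} [Group Γ] [MulAction Γ Ω] [Finite α] [MulAction Γ α]
    (hker : actionKernel Γ α ≤ actionKernel Γ Ω) : HasBase Γ Ω (baseBound (Nat.card α)) := by
  let f : Γ →* Equiv.Perm Ω × Equiv.Perm α :=
    (MulAction.toPermHom Γ Ω).prod (MulAction.toPermHom Γ α)
  let _ : MulAction f.range Ω :=
    MulAction.compHom Ω ((MonoidHom.fst (Equiv.Perm Ω) (Equiv.Perm α)).comp f.range.subtype)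
  let _ : MulAction f.range α :=
    MulAction.compHom α ((MonoidHom.snd (Equiv.Perm Ω) (Equiv.Perm α)).comp f.range.subtype)
  have : Finite f.range := by
    have hf : f.ker = actionKernel Γ α := (MonoidHom.ker_prod _ _).trans (inf_eq_right.2 hker)
    refine Nat.finite_of_card_ne_zero ?_
    rw [← Subgroup.index_ker, hf]
    exact ne_zero_of_dvd_ne_zero (Nat.factorial_ne_zero _) index_actionKernel_dvd_factorial
  have hker' : actionKernel f.range α ≤ actionKernel f.range Ω := by
    rintro ⟨_, γ, rfl⟩ hγ
    have hγα : γ ∈ actionKernel Γ α := mem_actionKernel.2 (mem_actionKernel.1 hγ)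
    exact mem_actionKernel.2 (mem_actionKernel.1 (hker hγα))
  obtain ⟨S, hcard, hS⟩ := boundHolds Ω _ f.range α rfl hker'
  refine ⟨S, hcard, fun γ hγ => mem_actionKernel.2 ?_⟩
  have hfγ : (⟨f γ, γ, rfl⟩ : f.range) ∈ fixingSubgroup f.range (S : Set Ω) :=
    (mem_fixingSubgroup_iff _).2 ((mem_fixingSubgroup_iff Γ).1 hγ)
  exact mem_actionKernel.1 (hS hfγ)

theorem stmt_1_general {Γ Ω Ω' : Type*} [Group Γ] [Finite Ω'] [MulAction Γ Ω] [MulAction Γ Ω']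
    (h : ∀ γ : Γ, (∀ x : Ω', γ • x = x) → ∀ x : Ω, γ • x = x) :
    ∃ S : Finset Ω, S.card ≤ (3 * Nat.card Ω' - 4) / 2 ∧
      ∀ γ : Γ, (∀ s ∈ S, γ • s = s) ↔ ∀ x : Ω, γ • x = x := by
  have hker : actionKernel Γ Ω' ≤ actionKernel Γ Ω := fun γ hγ =>
    mem_actionKernel.2 (h γ (mem_actionKernel.1 hγ))
  obtain ⟨S, hcard, hS⟩ := hasBase_baseBound hker
  refine ⟨S, hcard, fun γ => ⟨fun hγ => ?_, fun hγ s _ => hγ s⟩⟩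
  exact mem_actionKernel.1 (hS ((mem_fixingSubgroup_iff Γ).2 hγ))

/-- If the pointwise stabiliser of `Ω'` is contained in the pointwise stabiliser of `Ω`,
then there is `S ⊆ Ω` with `|S| ≤ 3|Ω'|/2` whose pointwise stabiliser equals that of `Ω`. -/
theorem stmt_1 {Γ Ω Ω' : Type*} [Group Γ] [Fintype Ω] [Fintype Ω']
    [MulAction Γ Ω] [MulAction Γ Ω']
    (h : ∀ γ : Γ, (∀ x : Ω', γ • x = x) → ∀ x : Ω, γ • x = x) :
    ∃ S : Finset Ω, (S.card : ℝ) ≤ 3 * (Fintype.card Ω' : ℝ) / 2 ∧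
      ∀ γ : Γ, (∀ s ∈ S, γ • s = s) ↔ ∀ x : Ω, γ • x = x := by
  obtain ⟨S, hcard, hS⟩ := stmt_1_general h
  have hcard' : 2 * S.card ≤ 3 * Fintype.card Ω' := by
    rw [Nat.card_eq_fintype_card] at hcard
    omega
  refine ⟨S, ?_, hS⟩
  rw [le_div_iff₀' two_pos]
  exact_mod_cast hcard'
end

section
/- Let $\Gamma$ be a group acting on two finite sets $\Omega$ and $\Omega'$ with $|\Omega'| \geq 1$. Suppose that the pointwise stabiliser of $\Omega'$ in $\Gamma$ is contained in the pointwise stabiliser of $\Omega$ in $\Gamma$. Then there exists a subset $S \subseteq \Omega$ such that $|S| \leq |\Omega'| \log_2 |\Omega'|$ and the pointwise stabiliser of $S$ in $\Gamma$ equals the pointwise stabiliser of $\Omega$ in $\Gamma$. -/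
/-!
Adding to a set `T` a point moved by some element of its pointwise stabiliser `Γ_(T)` shrinks that
stabiliser to a proper subgroup and hence at least doubles its index. So among the finite
`T ⊆ Ω` with `2 ^ |T| ≤ [Γ : Γ_(T)]`, one of largest size satisfies `Γ_(T) = Γ_(Ω)`. Such sets have
bounded size, because `Γ_(T) ≥ Γ_(Ω) ≥ Γ_(Ω')` and `Γ_(Ω')` is the kernel of `Γ → Sym(Ω')`, whence
`2 ^ |T| ≤ [Γ : Γ_(Ω')] ≤ |Ω'|! ≤ |Ω'| ^ |Ω'|`.
-/

lemma two_mul_index_le_index_of_lt {G : Type*} [Group G] {H K : Subgroup G} [H.FiniteIndex]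
    (hHK : H < K) : 2 * K.index ≤ H.index := by
  have hindex : H.relIndex K * K.index = H.index := Subgroup.relIndex_mul_index hHK.le
  have hne_zero : H.relIndex K ≠ 0 :=
    left_ne_zero_of_mul (hindex.trans_ne Subgroup.FiniteIndex.index_ne_zero)
  have hne_one : H.relIndex K ≠ 1 := fun h ↦ hHK.not_ge (Subgroup.relIndex_eq_one.mp h)
  rw [← hindex]
  exact Nat.mul_le_mul_right _ (by lia)

lemma natCast_le_mul_logb_of_pow_le_pow {a b : ℝ} {k m : ℕ} (hb : 1 < b)
    (h : b ^ k ≤ a ^ m) : (k : ℝ) ≤ m * Real.logb b a := by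
  have hlog : Real.logb b (b ^ k) ≤ Real.logb b (a ^ m) :=
    Real.logb_le_logb_of_le hb (by positivity) h
  rwa [Real.logb_pow, Real.logb_pow, Real.logb_self_eq_one hb, mul_one] at hlog

section FixingSubgroup

variable {G X : Type*} [Group G] [MulAction G X]

lemma fixingSubgroup_univ_eq_ker_toPermHom :
    fixingSubgroup G (Set.univ : Set X) = (MulAction.toPermHom G X).ker := by
  ext g
  simp [mem_fixingSubgroup_iff, MonoidHom.mem_ker, Equiv.ext_iff]

instance finiteIndex_fixingSubgroup_univ [Finite X] :
    (fixingSubgroup G (Set.univ : Set X)).FiniteIndex := by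
  rw [fixingSubgroup_univ_eq_ker_toPermHom]
  infer_instance

lemma index_fixingSubgroup_univ_dvd_factorial [Finite X] :
    (fixingSubgroup G (Set.univ : Set X)).index ∣ (Nat.card X).factorial := by
  rw [fixingSubgroup_univ_eq_ker_toPermHom, Subgroup.index_ker, ← Nat.card_perm]
  exact Subgroup.card_subgroup_dvd_card _

lemma two_mul_index_fixingSubgroup_le_index_insert {T : Set X} {x : X}
    [(fixingSubgroup G (insert x T)).FiniteIndex] {g : G} (hg : g ∈ fixingSubgroup G T)
    (hgx : g • x ≠ x) :
    2 * (fixingSubgroup G T).index ≤ (fixingSubgroup G (insert x T)).index := by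
  refine two_mul_index_le_index_of_lt
    (SetLike.lt_iff_le_and_exists.mpr
      ⟨fixingSubgroup_antitone G X (Set.subset_insert x T), g, hg, fun hg' ↦ hgx ?_⟩)
  exact (mem_fixingSubgroup_iff G).mp hg' x (Set.mem_insert x T)

lemma exists_finset_fixingSubgroup_eq_two_pow_card_le_index (s : Set X)
    [(fixingSubgroup G s).FiniteIndex] :
    ∃ S : Finset X, ↑S ⊆ s ∧ fixingSubgroup G (S : Set X) = fixingSubgroup G s ∧
      2 ^ S.card ≤ (fixingSubgroup G s).index := by
  classical
  let candidates : Set (Finset X) :=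
    {T | ↑T ⊆ s ∧ 2 ^ T.card ≤ (fixingSubgroup G (T : Set X)).index}
  have hpow_le {T : Finset X} (hT : T ∈ candidates) : 2 ^ T.card ≤ (fixingSubgroup G s).index :=
    hT.2.trans (Subgroup.index_antitone (fixingSubgroup_antitone G X hT.1))
  have hcard_finite : (Finset.card '' candidates).Finite := by
    refine (Set.finite_Iio (fixingSubgroup G s).index).subset ?_
    rintro _ ⟨T, hT, rfl⟩
    exact Nat.lt_two_pow_self.trans_le (hpow_le hT)
  obtain ⟨S, hS, hmax⟩ := Set.Finite.exists_maximalFor' Finset.card candidates hcard_finite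
    ⟨∅, by simp [candidates]⟩
  refine ⟨S, hS.1, le_antisymm (fun g hg ↦ ?_) (fixingSubgroup_antitone G X hS.1), hpow_le hS⟩
  refine (mem_fixingSubgroup_iff G).mpr fun x hx ↦ by_contra fun hgx ↦ ?_
  have hxS : x ∉ S := fun hxS ↦ hgx ((mem_fixingSubgroup_iff G).mp hg x hxS)
  have hcard : (insert x S).card = S.card + 1 := Finset.card_insert_of_notMem hxS
  have hsub : insert x (S : Set X) ⊆ s := Set.insert_subset hx hS.1
  have := Subgroup.finiteIndex_of_le (fixingSubgroup_antitone G X hsub)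
  have hinsert : insert x S ∈ candidates := by
    refine ⟨by rwa [Finset.coe_insert], ?_⟩
    calc 2 ^ (insert x S).card = 2 * 2 ^ S.card := by rw [hcard, pow_succ']
      _ ≤ 2 * (fixingSubgroup G (S : Set X)).index := Nat.mul_le_mul_left 2 hS.2
      _ ≤ (fixingSubgroup G (insert x (S : Set X))).index :=
        two_mul_index_fixingSubgroup_le_index_insert hg hgx
      _ = (fixingSubgroup G ((insert x S : Finset X) : Set X)).index := by
        rw [Finset.coe_insert]
  have hle : (insert x S).card ≤ S.card := hmax hinsert (by lia)
  lia

end FixingSubgroup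

theorem stmt_4_general {Γ Ω Ω' : Type*} [Group Γ] [Fintype Ω']
    [MulAction Γ Ω] [MulAction Γ Ω']
    (h : ∀ γ : Γ, (∀ x : Ω', γ • x = x) → ∀ x : Ω, γ • x = x) :
    ∃ S : Finset Ω,
      (S.card : ℝ) ≤ (Fintype.card Ω' : ℝ) * Real.logb 2 (Fintype.card Ω') ∧
      ∀ γ : Γ, (∀ s ∈ S, γ • s = s) ↔ ∀ x : Ω, γ • x = x := by
  have hle : fixingSubgroup Γ (Set.univ : Set Ω') ≤ fixingSubgroup Γ (Set.univ : Set Ω) :=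
    fun γ ↦ by simpa [mem_fixingSubgroup_iff] using h γ
  have := Subgroup.finiteIndex_of_le hle
  obtain ⟨S, -, hfix, hcard⟩ :=
    exists_finset_fixingSubgroup_eq_two_pow_card_le_index (G := Γ) (Set.univ : Set Ω)
  have hpow : 2 ^ S.card ≤ Fintype.card Ω' ^ Fintype.card Ω' :=
    calc 2 ^ S.card ≤ (fixingSubgroup Γ (Set.univ : Set Ω)).index := hcard
      _ ≤ (fixingSubgroup Γ (Set.univ : Set Ω')).index := Subgroup.index_antitone hle
      _ ≤ (Fintype.card Ω').factorial := Nat.le_of_dvd (Nat.factorial_pos _)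
        (Nat.card_eq_fintype_card (α := Ω') ▸ index_fixingSubgroup_univ_dvd_factorial)
      _ ≤ Fintype.card Ω' ^ Fintype.card Ω' := Nat.factorial_le_pow _
  refine ⟨S, natCast_le_mul_logb_of_pow_le_pow one_lt_two (mod_cast hpow), fun γ ↦ ?_⟩
  simpa [mem_fixingSubgroup_iff] using SetLike.ext_iff.mp hfix γ

/-- Elementary version: if the pointwise stabiliser of `Ω'` (with `|Ω'| ≥ 1`) is contained
in the pointwise stabiliser of `Ω`, then there is `S ⊆ Ω` with `|S| ≤ |Ω'| * log₂ |Ω'|`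
whose pointwise stabiliser equals that of `Ω`. -/
theorem stmt_4 {Γ Ω Ω' : Type*} [Group Γ] [Fintype Ω] [Fintype Ω']
    [MulAction Γ Ω] [MulAction Γ Ω'] (hΩ' : 1 ≤ Fintype.card Ω')
    (h : ∀ γ : Γ, (∀ x : Ω', γ • x = x) → ∀ x : Ω, γ • x = x) :
    ∃ S : Finset Ω,
      (S.card : ℝ) ≤ (Fintype.card Ω' : ℝ) * Real.logb 2 (Fintype.card Ω') ∧
      ∀ γ : Γ, (∀ s ∈ S, γ • s = s) ↔ ∀ x : Ω, γ • x = x :=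
  stmt_4_general h
end

section
/- Let $G$ be a connected, locally finite graph with infinite motion, let $v_0$ be a vertex of $G$, let $k \geq 0$, and let $\gamma$ be an automorphism of $G$ which fixes the ball $B(v_0,k)$ setwise and such that for every vertex $v$ with $d(v_0,v) = k+1$, the vertices $v$ and $\gamma v$ have exactly the same neighbours inside $B(v_0,k)$. Then $\gamma$ fixes $B(v_0,k)$ pointwise. -/
/-!
Cut `γ` off outside the ball `B`: let `φ` act as `γ` on `B` and as the identity elsewhere. Only
pairs `u ∈ B`, `v ∉ B` with `v` in the outer boundary of `B` could prevent `φ` from being an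
automorphism, and for those `γ u ∼ v` iff `γ u ∼ γ v` (as `v` and `γ v` have the same neighbours in
`B`) iff `u ∼ v`. By local finiteness `φ` moves only finitely many vertices, so infinite motion
forces `φ` to be the identity.
-/

section

variable {V : Type*} {G : SimpleGraph V}

theorem finite_ball [∀ v, Finite (G.neighborSet v)] (c : V) (n : ℕ) : (G.ball c n).Finite := by
  induction n with
  | zero => simp
  | succ n ih =>
    have hfin : ({c} ∪ ⋃ w ∈ G.ball c n, G.neighborSet w).Finite :=
      (Set.finite_singleton c).union (ih.biUnion fun w _ ↦ Set.toFinite (G.neighborSet w))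
    refine hfin.subset fun v (hv : G.edist v c < (n + 1 : ℕ)) ↦ ?_
    obtain ⟨p, hp⟩ := SimpleGraph.exists_walk_of_edist_ne_top hv.ne_top
    rw [← hp, Nat.cast_lt] at hv
    cases p with
    | nil => exact Or.inl rfl
    | cons hadj q =>
      have hq : q.length < n := Nat.lt_of_succ_lt_succ hv
      exact Or.inr (Set.mem_biUnion ((SimpleGraph.edist_le q).trans_lt (Nat.cast_lt.2 hq))
        hadj.symm)

theorem setOf_dist_le_eq_ball (hconn : G.Connected) (c : V) (k : ℕ) :
    {v | G.dist c v ≤ k} = G.ball c (k + 1 : ℕ) := by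
  ext v
  rw [Set.mem_ofPred_eq, SimpleGraph.mem_ball, SimpleGraph.edist_comm,
    ← (hconn c v).coe_dist_eq_edist, Nat.cast_lt, Nat.lt_succ_iff]

theorem finite_setOf_dist_le [∀ v, Finite (G.neighborSet v)] (hconn : G.Connected) (c : V)
    (k : ℕ) : {v | G.dist c v ≤ k}.Finite :=
  setOf_dist_le_eq_ball hconn c k ▸ finite_ball c (k + 1)

theorem dist_eq_add_one_of_adj (hconn : G.Connected) {c v w : V} {k : ℕ} (hw : G.dist c w ≤ k)
    (hv : ¬G.dist c v ≤ k) (hadj : G.Adj w v) : G.dist c v = k + 1 := by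
  have htri : G.dist c v ≤ G.dist c w + G.dist w v := hconn.dist_triangle
  rw [SimpleGraph.dist_eq_one_iff_adj.2 hadj] at htri
  lia

theorem exists_iso_eqOn_and_eqOn_id_compl {S : Set V} (γ : G ≃g G) (hS : ∀ v, γ v ∈ S ↔ v ∈ S)
    (hcut : ∀ u ∈ S, ∀ v ∉ S, G.Adj (γ u) v ↔ G.Adj u v) :
    ∃ φ : G ≃g G, Set.EqOn φ γ S ∧ Set.EqOn φ id Sᶜ := by
  classical
  let e : Equiv.Perm V := Equiv.Perm.ofSubtype (Equiv.Perm.subtypePerm γ.toEquiv hS)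
  have he_mem : ∀ v ∈ S, e v = γ v := fun v hv ↦
    Equiv.Perm.ofSubtype_subtypePerm_of_mem (g := γ.toEquiv) hS hv
  have he_notMem : ∀ v ∉ S, e v = v := fun v hv ↦
    Equiv.Perm.ofSubtype_subtypePerm_of_not_mem (g := γ.toEquiv) hS hv
  have he_adj (u v : V) : G.Adj (e u) (e v) ↔ G.Adj u v := by
    by_cases hu : u ∈ S <;> by_cases hv : v ∈ S
    · rw [he_mem u hu, he_mem v hv, γ.map_adj_iff]
    · rw [he_mem u hu, he_notMem v hv, hcut u hu v hv]
    · rw [he_notMem u hu, he_mem v hv, G.adj_comm, hcut v hv u hu, G.adj_comm]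
    · rw [he_notMem u hu, he_notMem v hv]
  exact ⟨⟨e, he_adj _ _⟩, he_mem, he_notMem⟩

/-- Infinite motion: an automorphism of `G` that is not the identity moves infinitely many
vertices. -/
def HasInfiniteMotion (G : SimpleGraph V) : Prop :=
  ∀ φ : G ≃g G, (∀ v, φ v = v) ∨ {v | φ v ≠ v}.Infinite

theorem HasInfiniteMotion.apply_eq_self (hmotion : HasInfiniteMotion G) {S : Set V}
    (hfin : S.Finite) {φ : G ≃g G} (hφ : Set.EqOn φ id Sᶜ) (v : V) : φ v = v :=
  (hmotion φ).resolve_right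
    (Set.not_infinite.2 (hfin.subset fun _ hw ↦ by_contra fun hwS ↦ hw (hφ hwS))) v

theorem stmt_5_general (hmotion : HasInfiniteMotion G) {S : Set V} (hfin : S.Finite)
    {γ : G ≃g G} (hset : γ '' S = S)
    (hnbr : ∀ v ∉ S, (∃ w ∈ S, G.Adj w v) → ∀ u ∈ S, G.Adj u v ↔ G.Adj u (γ v)) :
    ∀ v ∈ S, γ v = v := by
  have hS (v : V) : γ v ∈ S ↔ v ∈ S :=
    (Set.ext_iff.1 ((γ.toEquiv.eq_preimage_iff_image_eq S S).2 hset) v).symm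
  have hcut : ∀ u ∈ S, ∀ v ∉ S, G.Adj (γ u) v ↔ G.Adj u v := fun u hu v hv ↦ by
    by_cases hbdry : ∃ w ∈ S, G.Adj w v
    · rw [hnbr v hv hbdry (γ u) ((hS u).2 hu), γ.map_adj_iff]
    · exact iff_of_false (fun h ↦ hbdry ⟨γ u, (hS u).2 hu, h⟩) fun h ↦ hbdry ⟨u, hu, h⟩
  obtain ⟨φ, hφγ, hφid⟩ := exists_iso_eqOn_and_eqOn_id_compl γ hS hcut
  exact fun v hv ↦ (hφγ hv).symm.trans (hmotion.apply_eq_self hfin hφid v)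

end

/-- In a connected, locally finite graph with infinite motion, an automorphism which
fixes the ball `B(v₀,k)` setwise and such that every vertex `v` at distance `k+1`
has the same neighbours in `B(v₀,k)` as `γ v`, fixes `B(v₀,k)` pointwise. -/
theorem stmt_5 {V : Type*} (G : SimpleGraph V) [∀ v : V, Fintype (G.neighborSet v)]
    (hconn : G.Connected)
    (hmotion : ∀ φ : G ≃g G, (∀ v, φ v = v) ∨ {v : V | φ v ≠ v}.Infinite)
    (v0 : V) (k : ℕ) (γ : G ≃g G)
    (hset : (fun v => γ v) '' {v : V | G.dist v0 v ≤ k} = {v : V | G.dist v0 v ≤ k})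
    (hnbr : ∀ v : V, G.dist v0 v = k + 1 → ∀ u : V, G.dist v0 u ≤ k →
      (G.Adj u v ↔ G.Adj u (γ v))) :
    ∀ v : V, G.dist v0 v ≤ k → γ v = v :=
  stmt_5_general hmotion (finite_setOf_dist_le hconn v0 k) hset
    fun v hv ⟨_, hw, hadj⟩ ↦ hnbr v (dist_eq_add_one_of_adj hconn hw hv hadj)
end
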